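/- arXiv:2412.15782 — 3 statements merged into one kernel-verified Lean document; each statement's English description precedes it below -/
import Mathlib

section
/- Let G = (V, E, x) be a finite connected rooted graph with conductances λ ∈ (0,∞)^E, let N ∈ ℕ*, and let yz ∈ E be an edge. Let G̃_N be the graph obtained from G by adding N new vertices t₁,...,t_N on the edge yz (replacing yz by a path y, t₁, ..., t_N, z), and let λ̃ be the conductances on G̃_N defined by: λ̃ = λ on all edges not incident to any of t₁,...,t_N, and λ̃ = (N+1)λ_{yz} on every edge incident to at least one of t₁,...,t_N. Then for every vertex i ∈ V, Var^{IV-GFF}_{G̃_N,λ̃}[φ(i)] ≤ Var^{IV-GFF}_{G,λ}[φ(i)], and for every pair of vertices i,j ∈ V, Var^{IV-GFF}_{G̃_N,λ̃}[φ(i) − φ(j)] ≤ Var^{IV-GFF}_{G,λ}[φ(i) − φ(j)]. -/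
open scoped ENNReal

noncomputable section

/-- The graph on `V` whose edges are the pairs of distinct vertices carrying a positive
conductance. -/
def supportGraph {V : Type*} (c : V → V → ℝ) : SimpleGraph V :=
  SimpleGraph.fromRel (fun a b => 0 < c a b)

/-- Configurations of the integer-valued Gaussian free field on the rooted graph with
conductances `c` and root `x`: integer-valued height functions vanishing at the root and
(by convention) outside the connected component of the root. -/
def GffConfig {V : Type*} (c : V → V → ℝ) (x : V) : Type _ :=
  {φ : V → ℤ // φ x = 0 ∧ ∀ v : V, ¬ (supportGraph c).Reachable x v → φ v = 0}

/-- Boltzmann weight `exp(−∑_{ij∈E} λ_{ij}(φ(i)−φ(j))²)` of a configuration (each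
unordered pair is counted once, whence the factor `1/2` in the ordered sum). -/
def gffWeight {V : Type*} [Fintype V] (c : V → V → ℝ) (φ : V → ℤ) : ℝ :=
  Real.exp (-((1 : ℝ) / 2 * ∑ i : V, ∑ j : V, c i j * ((φ i - φ j : ℤ) : ℝ) ^ 2))

/-- Partition function of the integer-valued Gaussian free field. -/
def gffZ {V : Type*} [Fintype V] (c : V → V → ℝ) (x : V) : ℝ :=
  ∑' φ : GffConfig c x, gffWeight c φ.val

/-- Variance of an observable `f` under the integer-valued Gaussian free field
(real-valued formula, meaningful on the connected component of the root). -/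
def gffRVar {V : Type*} [Fintype V] (c : V → V → ℝ) (x : V) (f : (V → ℤ) → ℝ) : ℝ :=
  (∑' φ : GffConfig c x, f φ.val ^ 2 * gffWeight c φ.val) / gffZ c x
    - ((∑' φ : GffConfig c x, f φ.val * gffWeight c φ.val) / gffZ c x) ^ 2

open scoped Classical in
/-- Variance of the height `φ(i)` under the integer-valued Gaussian free field, set to
`∞` when `i` is not connected to the root. -/
def gffVar1 {V : Type*} [Fintype V] (c : V → V → ℝ) (x : V) (i : V) : ℝ≥0∞ :=
  if (supportGraph c).Reachable x i then
    ENNReal.ofReal (gffRVar c x fun φ => ((φ i : ℤ) : ℝ))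
  else ⊤

open scoped Classical in
/-- Variance of the height difference `φ(i) − φ(j)` under the integer-valued Gaussian
free field, set to `∞` when `i` or `j` is not connected to the root. -/
def gffVar2 {V : Type*} [Fintype V] (c : V → V → ℝ) (x : V) (i j : V) : ℝ≥0∞ :=
  if (supportGraph c).Reachable x i ∧ (supportGraph c).Reachable x j then
    ENNReal.ofReal (gffRVar c x fun φ => ((φ i : ℤ) : ℝ) - ((φ j : ℤ) : ℝ))
  else ⊤

end

/-- The conductances on the graph obtained from `(V, c)` by adding `N` new vertices
`t₁, …, t_N` (represented by `Sum.inr 0, …, Sum.inr (N−1)`) on the edge `yz`: the edge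
`yz` is replaced by the path `y, t₁, …, t_N, z`, every edge of which carries the
conductance `(N+1)·λ_{yz}`; all other conductances are unchanged. -/
noncomputable def addPathCond {V : Type*} [DecidableEq V]
    (c : V → V → ℝ) (y z : V) (N : ℕ) : V ⊕ Fin N → V ⊕ Fin N → ℝ
  | Sum.inl a, Sum.inl b => if (a = y ∧ b = z) ∨ (a = z ∧ b = y) then 0 else c a b
  | Sum.inl a, Sum.inr k =>
      if (a = y ∧ (k : ℕ) = 0) ∨ (a = z ∧ (k : ℕ) = N - 1) then ((N : ℝ) + 1) * c y z
      else 0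
  | Sum.inr k, Sum.inl a =>
      if (a = y ∧ (k : ℕ) = 0) ∨ (a = z ∧ (k : ℕ) = N - 1) then ((N : ℝ) + 1) * c y z
      else 0
  | Sum.inr k, Sum.inr l =>
      if (k : ℕ) + 1 = (l : ℕ) ∨ (l : ℕ) + 1 = (k : ℕ) then ((N : ℝ) + 1) * c y z else 0

lemma hs_congr {X : Type*} {f g : X → ℝ} {a : ℝ} (h : ∀ b, f b = g b) (hg : HasSum g a) :
    HasSum f a := by
  have e : f = g := funext h
  rw [e]
  exact hg

lemma summ_gauss {γ : ℝ} (hγ : 0 < γ) (α : ℝ) :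
    Summable (fun n : ℤ => Real.exp (-γ * ((n : ℝ) - α) ^ 2)) := by
  have h := summable_pow_mul_jacobiTheta₂_term_bound (γ * |α| / Real.pi)
    (T := γ / Real.pi) (by positivity) 0
  refine Summable.of_nonneg_of_le (fun _ => (Real.exp_pos _).le) (fun n => ?_) h
  simp only [pow_zero, one_mul]
  rw [Real.exp_le_exp]
  have hp := Real.pi_pos
  have e : -Real.pi * (γ / Real.pi * (n : ℝ) ^ 2 - 2 * (γ * |α| / Real.pi) * (|n| : ℤ))
      = -γ * n ^ 2 + 2 * γ * (|α| * |(n : ℝ)|) := by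
    push_cast
    field_simp
    ring
  rw [e]
  have h1 : α * n ≤ |α| * |(n : ℝ)| := by rw [← abs_mul]; exact le_abs_self _
  nlinarith [mul_le_mul_of_nonneg_left h1 hγ.le, mul_nonneg hγ.le (sq_nonneg α)]

lemma summ_pi_fin {ε : ℝ} (hε : 0 < ε) (n : ℕ) :
    Summable (fun φ : Fin n → ℤ => Real.exp (-ε * ∑ v, ((φ v : ℤ) : ℝ) ^ 2)) := by
  induction n with
  | zero => exact Summable.of_finite
  | succ n ih =>
    rw [← (Fin.consEquiv (fun _ : Fin (n + 1) => ℤ)).summable_iff]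
    have h := (summ_gauss hε 0).mul_of_nonneg ih (fun _ => (Real.exp_pos _).le)
      (fun _ => (Real.exp_pos _).le)
    refine h.congr (fun p => ?_)
    rw [← Real.exp_add]
    simp [Fin.consEquiv, Fin.sum_univ_succ]
    ring

lemma summ_pi {V : Type*} [Fintype V] {ε : ℝ} (hε : 0 < ε) :
    Summable (fun φ : V → ℤ => Real.exp (-ε * ∑ v, ((φ v : ℤ) : ℝ) ^ 2)) := by
  have e := Fintype.equivFin V
  have := summ_pi_fin hε (Fintype.card V)
  rw [← (Equiv.arrowCongr e (Equiv.refl ℤ)).summable_iff] at this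
  refine this.congr (fun φ => ?_)
  simp only [Function.comp, Equiv.arrowCongr_apply, Equiv.refl_apply]
  congr 2
  exact (Equiv.sum_comp e.symm (fun v => ((φ v : ℤ) : ℝ) ^ 2))

lemma poisson_cos {γ : ℝ} (hγ : 0 < γ) (θ u : ℝ) :
    HasSum (fun n : ℤ => Real.sqrt (Real.pi / γ) * Real.exp (-(2 * Real.pi * n - θ) ^ 2 / (4 * γ))
        * Real.cos ((2 * Real.pi * n - θ) * u))
      (∑' t : ℤ, Real.exp (-γ * ((t : ℝ) - u) ^ 2) * Real.cos (θ * t)) := by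
  have hp := Real.pi_pos
  have hpc : (Real.pi : ℂ) ≠ 0 := by exact_mod_cast hp.ne'
  have hgc : (γ : ℂ) ≠ 0 := by exact_mod_cast hγ.ne'
  have key := Complex.tsum_exp_neg_quadratic (a := ((γ / Real.pi : ℝ) : ℂ))
    (by rw [Complex.ofReal_re]; positivity)
    ((Complex.I * θ / 2 + γ * u) / Real.pi)
  -- left
  have hL : ∀ t : ℤ, ((Real.exp (-γ * ((t : ℝ) - u) ^ 2) : ℝ) : ℂ) * Complex.exp ((θ * t : ℝ) * Complex.I) =
      Complex.exp (-γ * u ^ 2) * Complex.exp (-Real.pi * ((γ / Real.pi : ℝ) : ℂ) * t ^ 2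
        + 2 * Real.pi * ((Complex.I * θ / 2 + γ * u) / Real.pi) * t) := by
    intro t
    rw [Complex.ofReal_exp, ← Complex.exp_add, ← Complex.exp_add]
    congr 1
    push_cast
    field_simp
    ring
  have hR : ∀ n : ℤ, ((Real.exp (-(2 * Real.pi * n - θ) ^ 2 / (4 * γ)) : ℝ) : ℂ) *
      Complex.exp ((-((2 * Real.pi * n - θ) * u) : ℝ) * Complex.I) =
      Complex.exp (-γ * u ^ 2) * Complex.exp (-Real.pi / ((γ / Real.pi : ℝ) : ℂ) *
        (n + Complex.I * ((Complex.I * θ / 2 + γ * u) / Real.pi)) ^ 2) := by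
    intro t
    rw [Complex.ofReal_exp, ← Complex.exp_add, ← Complex.exp_add]
    congr 1
    push_cast
    have hI := Complex.I_sq
    field_simp
    ring_nf
    have h4 : Complex.I ^ 4 = 1 := Complex.I_pow_four
    have h3 : Complex.I ^ 3 = - Complex.I := by rw [pow_succ, hI]; ring
    rw [h3, h4, hI]
    ring
  have hC : (1 : ℂ) / ((γ / Real.pi : ℝ) : ℂ) ^ (1 / 2 : ℂ) = ((Real.sqrt (Real.pi / γ) : ℝ) : ℂ) := by
    have : (1 / 2 : ℂ) = ((1 / 2 : ℝ) : ℂ) := by push_cast; rfl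
    rw [this, ← Complex.ofReal_cpow (by positivity), ← Real.sqrt_eq_rpow, ← Complex.ofReal_one,
      ← Complex.ofReal_div]
    congr 1
    rw [one_div, ← Real.sqrt_inv, inv_div]
  have sL : Summable (fun t : ℤ => ((Real.exp (-γ * ((t : ℝ) - u) ^ 2) : ℝ) : ℂ) *
      Complex.exp ((θ * t : ℝ) * Complex.I)) := by
    refine Summable.of_norm ?_
    refine (summ_gauss hγ u).congr (fun t => ?_)
    rw [norm_mul, Complex.norm_exp_ofReal_mul_I, Complex.norm_real, Real.norm_eq_abs,
      abs_of_pos (Real.exp_pos _), mul_one]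
  have sR : Summable (fun n : ℤ => ((Real.exp (-(2 * Real.pi * n - θ) ^ 2 / (4 * γ)) : ℝ) : ℂ) *
      Complex.exp ((-((2 * Real.pi * n - θ) * u) : ℝ) * Complex.I)) := by
    refine Summable.of_norm ?_
    refine (summ_gauss (γ := Real.pi ^ 2 / γ) (by positivity) (θ / (2 * Real.pi))).congr (fun t => ?_)
    rw [norm_mul, Complex.norm_exp_ofReal_mul_I, Complex.norm_real, Real.norm_eq_abs,
      abs_of_pos (Real.exp_pos _), mul_one]
    congr 1
    field_simp
    ring
  have hEq : ∑' t : ℤ, ((Real.exp (-γ * ((t : ℝ) - u) ^ 2) : ℝ) : ℂ) *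
      Complex.exp ((θ * t : ℝ) * Complex.I) =
      (Real.sqrt (Real.pi / γ) : ℝ) * ∑' n : ℤ,
      ((Real.exp (-(2 * Real.pi * n - θ) ^ 2 / (4 * γ)) : ℝ) : ℂ) *
      Complex.exp ((-((2 * Real.pi * n - θ) * u) : ℝ) * Complex.I) := by
    simp_rw [hL, hR]
    rw [tsum_mul_left, tsum_mul_left, key, hC]
    ring
  have h1 := Complex.hasSum_re (sR.hasSum.mul_left ((Real.sqrt (Real.pi / γ) : ℝ) : ℂ))
  rw [← hEq, Complex.re_tsum sL] at h1
  have e1 : ∀ t : ℤ, (((Real.exp (-γ * ((t : ℝ) - u) ^ 2) : ℝ) : ℂ) *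
      Complex.exp ((θ * t : ℝ) * Complex.I)).re =
      Real.exp (-γ * ((t : ℝ) - u) ^ 2) * Real.cos (θ * t) := by
    intro t
    rw [Complex.re_ofReal_mul, Complex.exp_ofReal_mul_I_re]
  simp_rw [e1] at h1
  convert h1 using 2 with n
  rw [Complex.re_ofReal_mul, Complex.re_ofReal_mul, Complex.exp_ofReal_mul_I_re, Real.cos_neg,
    mul_assoc]

def GoodFn (r : ℤ → ℝ) : Prop :=
  ∃ (ι : Type) (p θ : ι → ℝ), (∀ j, 0 ≤ p j) ∧ Summable p ∧
    ∀ m : ℤ, r m = ∑' j, p j * Real.cos (θ j * m)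

lemma abs_mul_cos_le {p : ℝ} (hp : 0 ≤ p) (x : ℝ) : ‖p * Real.cos x‖ ≤ p := by
  rw [norm_mul, Real.norm_eq_abs, Real.norm_eq_abs, abs_of_nonneg hp]
  exact mul_le_of_le_one_right hp (Real.abs_cos_le_one x)

lemma good_step {γ : ℝ} (hγ : 0 < γ) (μ : ℝ) {r : ℤ → ℝ} (hr : GoodFn r) :
    ∃ r' : ℤ → ℝ, GoodFn r' ∧
      ∀ m : ℤ, HasSum (fun t : ℤ => Real.exp (-γ * ((t : ℝ) - μ * m) ^ 2) * r t) (r' m) := by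
  obtain ⟨ι, p, θ, hp, sp, hrm⟩ := hr
  -- double summability
  have sd : ∀ m : ℤ, Summable (fun q : ℤ × ι => Real.exp (-γ * ((q.1 : ℝ) - μ * m) ^ 2) *
      (p q.2 * Real.cos (θ q.2 * q.1))) := by
    intro m
    have := (summ_gauss hγ (μ * m)).mul_of_nonneg sp (fun _ => (Real.exp_pos _).le) hp
    refine Summable.of_norm_bounded this (fun q => ?_)
    rw [norm_mul, Real.norm_eq_abs, abs_of_pos (Real.exp_pos _)]
    exact mul_le_mul_of_nonneg_left (abs_mul_cos_le (hp _) _) (Real.exp_pos _).le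
  have hsum : ∀ m : ℤ, HasSum (fun t : ℤ => Real.exp (-γ * ((t : ℝ) - μ * m) ^ 2) * r t)
      (∑' q : ℤ × ι, Real.exp (-γ * ((q.1 : ℝ) - μ * m) ^ 2) *
      (p q.2 * Real.cos (θ q.2 * q.1))) := by
    intro m
    refine (sd m).hasSum.prod_fiberwise (fun t => ?_)
    rw [hrm]
    refine HasSum.mul_left _ (Summable.hasSum ?_)
    exact Summable.of_norm_bounded sp (fun j => abs_mul_cos_le (hp _) _)
  refine ⟨_, ?_, hsum⟩
  obtain ⟨q, hqd⟩ : ∃ q : ι → ℤ → ℝ, ∀ j n, q j n = Real.sqrt (Real.pi / γ) *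
    Real.exp (-(2 * Real.pi * n - θ j) ^ 2 / (4 * γ)) := ⟨_, fun _ _ => rfl⟩
  have hq : ∀ j n, 0 ≤ q j n := fun j n => by rw [hqd]; positivity
  have hq0 : ∀ j, HasSum (q j) (∑' t : ℤ, Real.exp (-γ * ((t : ℝ) - 0) ^ 2) * Real.cos (θ j * t)) := by
    intro j
    have := poisson_cos hγ (θ j) 0
    simpa [← hqd] using this
  have sprod : Summable (fun jn : ι × ℤ => p jn.1 * q jn.1 jn.2) := by
    have h0 : (0 : ι × ℤ → ℝ) ≤ fun jn : ι × ℤ => p jn.1 * q jn.1 jn.2 :=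
      fun jn => mul_nonneg (hp _) (hq _ _)
    refine (summable_prod_of_nonneg h0).mpr ⟨fun j => (hq0 j).summable.mul_left (p j), ?_⟩
    refine Summable.of_nonneg_of_le (fun j => tsum_nonneg fun n => mul_nonneg (hp _) (hq _ _))
      (fun j => ?_) (sp.mul_right (∑' t : ℤ, Real.exp (-γ * ((t : ℝ) - 0) ^ 2)))
    simp only
    rw [tsum_mul_left, (hq0 j).tsum_eq]
    refine mul_le_mul_of_nonneg_left ?_ (hp j)
    have hle : ∀ t : ℤ, Real.exp (-γ * ((t : ℝ) - 0) ^ 2) * Real.cos (θ j * t) ≤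
      Real.exp (-γ * ((t : ℝ) - 0) ^ 2) := fun t =>
        mul_le_of_le_one_right (Real.exp_pos _).le (Real.cos_le_one _)
    refine Summable.tsum_le_tsum hle ?_ (summ_gauss hγ 0)
    exact Summable.of_norm_bounded (summ_gauss hγ 0) (fun t => abs_mul_cos_le (Real.exp_pos _).le _)
  refine ⟨ι × ℤ, fun jn => p jn.1 * q jn.1 jn.2,
    fun jn => (2 * Real.pi * jn.2 - θ jn.1) * μ, fun jn => mul_nonneg (hp _) (hq _ _), sprod, ?_⟩
  intro m
  have sd' := (Equiv.prodComm ι ℤ).summable_iff.mpr (sd m)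
  beta_reduce
  rw [← (Equiv.prodComm ι ℤ).tsum_eq]
  refine sd'.tsum_prod.trans ?_
  rw [Summable.tsum_prod]
  · refine tsum_congr (fun j => ?_)
    have h := poisson_cos hγ (θ j) (μ * m)
    have h2 := (h.mul_left (p j)).tsum_eq
    rw [← tsum_mul_left] at h2
    calc _ = ∑' t : ℤ, p j * (Real.exp (-γ * ((t : ℝ) - μ * m) ^ 2) * Real.cos (θ j * t)) := by
            refine tsum_congr (fun t => ?_)
            simp [Equiv.prodComm]
            ring
      _ = _ := h2.symm
      _ = _ := by
            refine tsum_congr (fun t => ?_)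
            simp only [hqd]
            rw [← mul_assoc ((2 * Real.pi * (t : ℝ) - θ j))]
            ring
  · exact Summable.of_norm_bounded sprod (fun jn => abs_mul_cos_le (mul_nonneg (hp _) (hq _ _)) _)

def pathE : (n : ℕ) → ℤ → ℤ → (Fin n → ℤ) → ℝ
  | 0, a, b, _ => ((a - b : ℤ) : ℝ) ^ 2
  | n + 1, a, b, t => ((a - t 0 : ℤ) : ℝ) ^ 2 + pathE n (t 0) b (fun k => t k.succ)

lemma good_one : GoodFn (fun _ => 1) :=
  ⟨Unit, fun _ => 1, fun _ => 0, fun _ => zero_le_one, Summable.of_finite, fun m => by simp⟩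

lemma path_sum {Λ : ℝ} (hΛ : 0 < Λ) (n : ℕ) :
    ∃ r : ℤ → ℝ, GoodFn r ∧ ∀ a b : ℤ,
      HasSum (fun t : Fin n → ℤ => Real.exp (-Λ * pathE n a b t))
        (Real.exp (-(Λ / (n + 1)) * ((a - b : ℤ) : ℝ) ^ 2) * r (a - b)) := by
  induction n with
  | zero =>
    refine ⟨_, good_one, fun a b => ?_⟩
    convert hasSum_unique (fun t : Fin 0 → ℤ => Real.exp (-Λ * pathE 0 a b t)) using 1
    simp [pathE]
  | succ n ih =>
    obtain ⟨r, hr, hs⟩ := ih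
    obtain ⟨r', hr', hs'⟩ := good_step (γ := Λ * (n + 2) / (n + 1)) (by positivity)
      ((n + 1) / (n + 2)) hr
    refine ⟨r', hr', fun a b => ?_⟩
    have h1 : HasSum (fun s : ℤ => Real.exp (-Λ * ((a - s : ℤ) : ℝ) ^ 2) *
        (Real.exp (-(Λ / (n + 1)) * ((s - b : ℤ) : ℝ) ^ 2) * r (s - b)))
        (Real.exp (-(Λ / ((n + 1 : ℕ) + 1)) * ((a - b : ℤ) : ℝ) ^ 2) * r' (a - b)) := by
      rw [← (Equiv.addRight b).hasSum_iff]
      refine hs_congr (fun t => ?_)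
        ((hs' (a - b)).mul_left (Real.exp (-(Λ / ((n + 1 : ℕ) + 1)) * ((a - b : ℤ) : ℝ) ^ 2)))
      simp only [Function.comp, Equiv.coe_addRight, add_sub_cancel_right]
      rw [← mul_assoc, ← mul_assoc, ← Real.exp_add, ← Real.exp_add]
      congr 2
      push_cast
      field_simp
      ring
    rw [← (Fin.consEquiv (fun _ : Fin (n + 1) => ℤ)).hasSum_iff]
    have hF : ∀ p : ℤ × (Fin n → ℤ), ((fun t : Fin (n + 1) → ℤ => Real.exp (-Λ * pathE (n + 1) a b t)) ∘
        (Fin.consEquiv (fun _ : Fin (n + 1) => ℤ))) p =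
        Real.exp (-Λ * ((a - p.1 : ℤ) : ℝ) ^ 2) * Real.exp (-Λ * pathE n p.1 b p.2) := by
      intro p
      rw [← Real.exp_add]
      simp only [Function.comp, Fin.consEquiv, pathE, Equiv.coe_fn_mk, Fin.cons_zero, Fin.cons_succ]
      congr 1
      ring
    have hfib : ∀ s : ℤ, HasSum (fun t : Fin n → ℤ => Real.exp (-Λ * ((a - s : ℤ) : ℝ) ^ 2) *
        Real.exp (-Λ * pathE n s b t)) (Real.exp (-Λ * ((a - s : ℤ) : ℝ) ^ 2) *
        (Real.exp (-(Λ / (n + 1)) * ((s - b : ℤ) : ℝ) ^ 2) * r (s - b))) :=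
      fun s => (hs s b).mul_left _
    have hsm : Summable (fun p : ℤ × (Fin n → ℤ) =>
        Real.exp (-Λ * ((a - p.1 : ℤ) : ℝ) ^ 2) * Real.exp (-Λ * pathE n p.1 b p.2)) := by
      have h0 : (0 : ℤ × (Fin n → ℤ) → ℝ) ≤ fun p : ℤ × (Fin n → ℤ) =>
        Real.exp (-Λ * ((a - p.1 : ℤ) : ℝ) ^ 2) * Real.exp (-Λ * pathE n p.1 b p.2) :=
        fun p => mul_nonneg (Real.exp_pos _).le (Real.exp_pos _).le
      refine (summable_prod_of_nonneg h0).mpr ⟨fun s => (hfib s).summable, ?_⟩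
      refine h1.summable.congr (fun s => (hfib s).tsum_eq.symm)
    rw [show _ = _ from funext hF]
    have := hsm.hasSum.prod_fiberwise hfib
    rw [← this.unique h1]
    exact hsm.hasSum

lemma pathE_closed (n : ℕ) (a b : ℤ) (t : Fin (n + 1) → ℤ) :
    pathE (n + 1) a b t = ((a - t 0 : ℤ) : ℝ) ^ 2 +
      ∑ k : Fin n, ((t k.castSucc - t k.succ : ℤ) : ℝ) ^ 2 + ((b - t (Fin.last n) : ℤ) : ℝ) ^ 2 := by
  induction n generalizing a with
  | zero => simp [pathE]; ring
  | succ n ih =>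
    rw [pathE, ih, Fin.sum_univ_succ]
    simp
    ring

/-- energy -/
noncomputable def QQ {V : Type*} [Fintype V] (c : V → V → ℝ) (φ : V → ℤ) : ℝ :=
  (1 : ℝ) / 2 * ∑ i : V, ∑ j : V, c i j * ((φ i - φ j : ℤ) : ℝ) ^ 2

lemma QQ_nonneg {V : Type*} [Fintype V] {c : V → V → ℝ} (hnn : ∀ i j, 0 ≤ c i j) (φ : V → ℤ) :
    0 ≤ QQ c φ := by
  unfold QQ
  have : 0 ≤ ∑ i : V, ∑ j : V, c i j * ((φ i - φ j : ℤ) : ℝ) ^ 2 :=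
    Finset.sum_nonneg fun i _ => Finset.sum_nonneg fun j _ => mul_nonneg (hnn i j) (sq_nonneg _)
  linarith

lemma QQ_edge {V : Type*} [Fintype V] {c : V → V → ℝ} (hnn : ∀ i j, 0 ≤ c i j) (φ : V → ℤ)
    (i j : V) : c i j * ((φ i - φ j : ℤ) : ℝ) ^ 2 ≤ 2 * QQ c φ := by
  unfold QQ
  have h1 : c i j * ((φ i - φ j : ℤ) : ℝ) ^ 2 ≤ ∑ j : V, c i j * ((φ i - φ j : ℤ) : ℝ) ^ 2 :=
    Finset.single_le_sum (f := fun j => c i j * ((φ i - φ j : ℤ) : ℝ) ^ 2)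
      (fun j _ => mul_nonneg (hnn i j) (sq_nonneg _)) (Finset.mem_univ j)
  have h2 : ∑ j : V, c i j * ((φ i - φ j : ℤ) : ℝ) ^ 2 ≤
      ∑ i : V, ∑ j : V, c i j * ((φ i - φ j : ℤ) : ℝ) ^ 2 :=
    Finset.single_le_sum (f := fun i => ∑ j : V, c i j * ((φ i - φ j : ℤ) : ℝ) ^ 2)
      (fun i _ => Finset.sum_nonneg fun j _ => mul_nonneg (hnn i j) (sq_nonneg _))
      (Finset.mem_univ i)
  linarith

lemma vertex_bound {V : Type*} [Fintype V] {c : V → V → ℝ} (hnn : ∀ i j, 0 ≤ c i j)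
    (x v : V) (h : (supportGraph c).Reachable x v) :
    ∃ C : ℝ, 0 ≤ C ∧ ∀ φ : V → ℤ, φ x = 0 → ((φ v : ℤ) : ℝ) ^ 2 ≤ C * QQ c φ := by
  rw [SimpleGraph.reachable_iff_reflTransGen] at h
  induction h with
  | refl => exact ⟨0, le_rfl, fun φ h => by simp [h]⟩
  | @tail a b _ hab ih =>
    obtain ⟨C, hC, hb⟩ := ih
    have hpos : ∃ d : ℝ, 0 < d ∧ ∀ φ : V → ℤ, d * ((φ a : ℝ) - φ b) ^ 2 ≤ 2 * QQ c φ := by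
      rw [supportGraph, SimpleGraph.fromRel_adj] at hab
      rcases hab.2 with h | h
      · exact ⟨_, h, fun φ => by simpa using QQ_edge hnn φ a b⟩
      · refine ⟨_, h, fun φ => ?_⟩
        have := QQ_edge hnn φ b a
        push_cast at this
        nlinarith
    obtain ⟨d, hd, hdb⟩ := hpos
    refine ⟨2 * C + 4 / d, by positivity, fun φ h0 => ?_⟩
    have h1 := hb φ h0
    have h2 : ((φ a : ℝ) - φ b) ^ 2 ≤ 2 / d * QQ c φ := by
      rw [div_mul_eq_mul_div, le_div_iff₀ hd]
      linarith [hdb φ]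
    have h3 : (4 / d) * QQ c φ = 2 * (2 / d * QQ c φ) := by ring
    nlinarith [sq_nonneg ((φ b : ℝ) - 2 * φ a)]

lemma quad_bound {V : Type*} [Fintype V] {c : V → V → ℝ} (hnn : ∀ i j, 0 ≤ c i j)
    (hconn : (supportGraph c).Connected) (x : V) :
    ∃ ε : ℝ, 0 < ε ∧ ∀ φ : V → ℤ, φ x = 0 → ε * ∑ v, ((φ v : ℤ) : ℝ) ^ 2 ≤ QQ c φ := by
  choose C hC hb using fun v => vertex_bound hnn x v (hconn x v)
  have hS : 0 ≤ ∑ v, C v := Finset.sum_nonneg fun v _ => hC v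
  refine ⟨1 / (∑ v, C v + 1), by positivity, fun φ h0 => ?_⟩
  rw [div_mul_eq_mul_div, one_mul, div_le_iff₀ (by positivity)]
  have : ∑ v, ((φ v : ℤ) : ℝ) ^ 2 ≤ ∑ v, C v * QQ c φ := Finset.sum_le_sum fun v _ => hb v φ h0
  rw [← Finset.sum_mul] at this
  nlinarith [QQ_nonneg hnn φ]

lemma summ_main {V : Type*} [Fintype V] {c : V → V → ℝ} (hnn : ∀ i j, 0 ≤ c i j)
    (hconn : (supportGraph c).Connected) (x i j : V) :
    Summable (fun φ : {φ : V → ℤ // φ x = 0} =>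
      (1 + ((φ.1 i - φ.1 j : ℤ) : ℝ) ^ 2) * Real.exp (-(QQ c φ.1 / 2))) := by
  obtain ⟨ε, hε, hq⟩ := quad_bound hnn hconn x
  have h1 : Summable (fun φ : {φ : V → ℤ // φ x = 0} =>
      (16 / ε + 1) * Real.exp (-(ε / 4) * ∑ v, ((φ.1 v : ℤ) : ℝ) ^ 2)) :=
    ((summ_pi (V := V) (ε := ε / 4) (by positivity)).comp_injective
      Subtype.val_injective).mul_left _
  refine Summable.of_nonneg_of_le (fun φ => by positivity) (fun φ => ?_) h1
  have h2 := hq φ.1 φ.2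
  set S := ∑ v, ((φ.1 v : ℤ) : ℝ) ^ 2 with hS
  have hi : ((φ.1 i : ℤ) : ℝ) ^ 2 ≤ S :=
    Finset.single_le_sum (f := fun v => ((φ.1 v : ℤ) : ℝ) ^ 2) (fun _ _ => sq_nonneg _)
      (Finset.mem_univ i)
  have hj : ((φ.1 j : ℤ) : ℝ) ^ 2 ≤ S :=
    Finset.single_le_sum (f := fun v => ((φ.1 v : ℤ) : ℝ) ^ 2) (fun _ _ => sq_nonneg _)
      (Finset.mem_univ j)
  have hS0 : 0 ≤ S := le_trans (sq_nonneg _) hi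
  have hf : ((φ.1 i - φ.1 j : ℤ) : ℝ) ^ 2 ≤ 4 * S := by
    push_cast
    nlinarith [sq_nonneg ((φ.1 i : ℝ) + φ.1 j)]
  have he : Real.exp (-(QQ c φ.1 / 2)) ≤ Real.exp (-(ε / 4) * S) * Real.exp (-(ε / 4) * S) := by
    rw [← Real.exp_add, Real.exp_le_exp]
    linarith
  have hx : (1 + 4 * S) * Real.exp (-(ε / 4) * S) ≤ 16 / ε + 1 := by
    have h5 : 1 + ε / 4 * S ≤ Real.exp (ε / 4 * S) := by linarith [Real.add_one_le_exp (ε / 4 * S)]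
    rw [neg_mul, Real.exp_neg, mul_inv_le_iff₀ (Real.exp_pos _)]
    calc 1 + 4 * S ≤ (16 / ε + 1) * (1 + ε / 4 * S) := by
            have : (16 / ε + 1) * (1 + ε / 4 * S) = 16 / ε + 1 + 4 * S + ε / 4 * S := by
              field_simp
              ring
            rw [this]
            have : 0 < 16 / ε := by positivity
            nlinarith [mul_nonneg hε.le hS0]
      _ ≤ _ := mul_le_mul_of_nonneg_left h5 (by positivity)
  calc _ ≤ (1 + 4 * S) * (Real.exp (-(ε / 4) * S) * Real.exp (-(ε / 4) * S)) := by
          apply mul_le_mul _ he (Real.exp_pos _).le (by positivity)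
          linarith
    _ = ((1 + 4 * S) * Real.exp (-(ε / 4) * S)) * Real.exp (-(ε / 4) * S) := by ring
    _ ≤ _ := mul_le_mul_of_nonneg_right hx (Real.exp_pos _).le

abbrev AA {V : Type*} (x : V) := {φ : V → ℤ // φ x = 0}

abbrev PP {V : Type*} (x : V) := {p : V → ℤ // p x = 0 ∧ ∀ v, p v = 0 ∨ p v = 1}

def dupE {V : Type*} (x : V) : PP x × AA x × AA x ≃ AA x × AA x where
  toFun q := (⟨fun v => q.1.1 v + q.2.1.1 v + q.2.2.1 v, by
      simp [q.1.2.1, q.2.1.2, q.2.2.2]⟩, ⟨fun v => q.2.1.1 v - q.2.2.1 v, by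
      simp [q.2.1.2, q.2.2.2]⟩)
  invFun q := (⟨fun v => (q.1.1 v + q.2.1 v) % 2, by simp [q.1.2, q.2.2], fun v => Int.emod_two_eq_zero_or_one _⟩,
    ⟨fun v => (q.1.1 v + q.2.1 v) / 2, by simp [q.1.2, q.2.2]⟩,
    ⟨fun v => (q.1.1 v + q.2.1 v) / 2 - q.2.1 v, by simp [q.1.2, q.2.2]⟩)
  left_inv := by
    rintro ⟨⟨p, hp0, hp⟩, ⟨u, hu⟩, ⟨w, hw⟩⟩
    refine Prod.ext (Subtype.ext (funext fun v => ?_))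
      (Prod.ext (Subtype.ext (funext fun v => ?_)) (Subtype.ext (funext fun v => ?_)))
    all_goals
      have := hp v
      simp only
      omega
  right_inv := by
    rintro ⟨⟨u, hu⟩, ⟨w, hw⟩⟩
    refine Prod.ext (Subtype.ext (funext fun v => ?_)) (Subtype.ext (funext fun v => ?_))
    all_goals
      simp only
      omega

lemma dup_nonneg {V : Type*} (x : V) (h : (V → ℤ) → ℝ)
    (hs : Summable (fun φ : AA x => h φ.1))
    (hd : Summable (fun q : AA x × AA x => h (q.1.1 + q.2.1) * h (q.1.1 - q.2.1))) :
    0 ≤ ∑' q : AA x × AA x, h (q.1.1 + q.2.1) * h (q.1.1 - q.2.1) := by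
  rw [← (dupE x).tsum_eq]
  have hd' := (dupE x).summable_iff.mpr hd
  have hF : ∀ q : PP x × AA x × AA x,
      h (((dupE x) q).1.1 + ((dupE x) q).2.1) * h (((dupE x) q).1.1 - ((dupE x) q).2.1) =
      h (q.1.1 + 2 • q.2.1.1) * h (q.1.1 + 2 • q.2.2.1) := by
    intro q
    congr 2
    · ext v
      simp [dupE]
      ring
    · ext v
      simp [dupE]
      ring
  have hd2 : Summable (fun q : PP x × AA x × AA x =>
      h (q.1.1 + 2 • q.2.1.1) * h (q.1.1 + 2 • q.2.2.1)) := hd'.congr (fun q => hF q)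
  simp_rw [hF]
  rw [hd2.tsum_prod]
  refine tsum_nonneg fun p => ?_
  have hsp : Summable (fun u : AA x => h (p.1 + 2 • u.1)) := by
    let e : AA x → AA x := fun u => ⟨p.1 + 2 • u.1, by simp [p.2.1, u.2]⟩
    have he : Function.Injective e := by
      intro u w huw
      have := congrArg Subtype.val huw
      refine Subtype.ext (funext fun v => ?_)
      have := congrFun this v
      simp [e] at this
      exact this
    exact hs.comp_injective he
  have := hsp.tsum_mul_tsum hsp (hd2.prod_factor p)
  simp only at this ⊢
  rw [← this]
  exact mul_self_nonneg _

lemma QQ_para {V : Type*} [Fintype V] (c : V → V → ℝ) (φ ψ : V → ℤ) :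
    QQ c (φ + ψ) / 2 + QQ c (φ - ψ) / 2 = QQ c φ + QQ c ψ := by
  unfold QQ
  simp only [Finset.mul_sum, Finset.sum_div]
  simp only [← Finset.sum_add_distrib]
  refine Finset.sum_congr rfl fun i _ => Finset.sum_congr rfl fun j _ => ?_
  simp only [Pi.add_apply, Pi.sub_apply]
  push_cast
  ring

lemma cos_sub_cos_dup (a b : ℝ) :
    Real.cos b - Real.cos a = 2 * Real.sin ((a + b) / 2) * Real.sin ((a - b) / 2) := by
  rw [Real.cos_sub_cos, add_comm b a, show (b - a) / 2 = -((a - b) / 2) by ring, Real.sin_neg]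
  ring

lemma symm_tsum {X : Type*} {D : X × X → ℝ} (hD : Summable D) :
    HasSum (fun q => (1 / 2 : ℝ) * (D q + D q.swap)) (∑' q, D q) := by
  have h2 := (Equiv.prodComm X X).hasSum_iff.mpr hD.hasSum
  have h3 := (hD.hasSum.add h2).mul_left (1 / 2 : ℝ)
  rw [show (1 / 2 : ℝ) * (∑' q, D q + ∑' q, D q) = ∑' q, D q by ring] at h3
  exact h3

lemma cov_cos {V : Type*} [Fintype V] {c : V → V → ℝ} (hnn : ∀ i j, 0 ≤ c i j)
    (hconn : (supportGraph c).Connected) (x i j k l : V) (θ : ℝ) :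
    (∑' φ : AA x, (((φ.1 i - φ.1 j : ℤ) : ℝ) ^ 2 * Real.exp (-QQ c φ.1)) *
      Real.cos (θ * ((φ.1 k - φ.1 l : ℤ) : ℝ))) * (∑' φ : AA x, Real.exp (-QQ c φ.1)) ≤
    (∑' φ : AA x, ((φ.1 i - φ.1 j : ℤ) : ℝ) ^ 2 * Real.exp (-QQ c φ.1)) *
      (∑' φ : AA x, Real.exp (-QQ c φ.1) * Real.cos (θ * ((φ.1 k - φ.1 l : ℤ) : ℝ))) := by
  have sm := summ_main hnn hconn x i j
  have hle : ∀ φ : AA x, Real.exp (-QQ c φ.1) ≤ Real.exp (-(QQ c φ.1 / 2)) := fun φ => by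
    rw [Real.exp_le_exp]; linarith [QQ_nonneg hnn φ.1]
  have sW : Summable (fun φ : AA x => Real.exp (-QQ c φ.1)) := by
    refine Summable.of_nonneg_of_le (fun φ => by positivity) (fun φ => ?_) sm
    nlinarith [hle φ, mul_nonneg (sq_nonneg ((φ.1 i - φ.1 j : ℤ) : ℝ)) (Real.exp_pos (-(QQ c φ.1 / 2))).le]
  have sF : Summable (fun φ : AA x => ((φ.1 i - φ.1 j : ℤ) : ℝ) ^ 2 * Real.exp (-QQ c φ.1)) := by
    refine Summable.of_nonneg_of_le (fun φ => by positivity) (fun φ => ?_) sm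
    nlinarith [mul_le_mul_of_nonneg_left (hle φ) (sq_nonneg ((φ.1 i - φ.1 j : ℤ) : ℝ)),
      Real.exp_pos (-(QQ c φ.1 / 2))]
  have sFC : Summable (fun φ : AA x => (((φ.1 i - φ.1 j : ℤ) : ℝ) ^ 2 * Real.exp (-QQ c φ.1)) *
      Real.cos (θ * ((φ.1 k - φ.1 l : ℤ) : ℝ))) :=
    Summable.of_norm_bounded sF (fun φ => abs_mul_cos_le (by positivity) _)
  have sC : Summable (fun φ : AA x => Real.exp (-QQ c φ.1) *
      Real.cos (θ * ((φ.1 k - φ.1 l : ℤ) : ℝ))) :=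
    Summable.of_norm_bounded sW (fun φ => abs_mul_cos_le (by positivity) _)
  have p1 := summable_mul_of_summable_norm sFC.norm sW.norm
  have p2 := summable_mul_of_summable_norm sF.norm sC.norm
  rw [tsum_mul_tsum_of_summable_norm sFC.norm sW.norm, tsum_mul_tsum_of_summable_norm sF.norm sC.norm]
  rw [← sub_nonneg, ← p2.tsum_sub p1]
  have pD := p2.sub p1
  have pS := symm_tsum pD
  let h : (V → ℤ) → ℝ := fun φ => ((φ i - φ j : ℤ) : ℝ) *
    Real.sin (θ * ((φ k - φ l : ℤ) : ℝ) / 2) * Real.exp (-(QQ c φ / 2))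
  have hs : Summable (fun φ : AA x => h φ.1) := by
    refine Summable.of_norm_bounded sm (fun φ => ?_)
    simp only [h]
    rw [norm_mul, norm_mul, Real.norm_eq_abs, Real.norm_eq_abs, Real.norm_eq_abs,
      abs_of_pos (Real.exp_pos _)]
    refine mul_le_mul_of_nonneg_right ?_ (Real.exp_pos _).le
    refine (mul_le_of_le_one_right (abs_nonneg _) (Real.abs_sin_le_one _)).trans ?_
    rw [← sq_abs]
    nlinarith [sq_nonneg (|((φ.1 i - φ.1 j : ℤ) : ℝ)| - 1)]
  have hpt : ∀ q : AA x × AA x, h (q.1.1 + q.2.1) * h (q.1.1 - q.2.1) = (1 / 2 : ℝ) * (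
    ((((q.1.1 i - q.1.1 j : ℤ) : ℝ) ^ 2 * Real.exp (-QQ c q.1.1)) * (Real.exp (-QQ c q.2.1) *
      Real.cos (θ * ((q.2.1 k - q.2.1 l : ℤ) : ℝ))) -
    ((((q.1.1 i - q.1.1 j : ℤ) : ℝ) ^ 2 * Real.exp (-QQ c q.1.1)) *
      Real.cos (θ * ((q.1.1 k - q.1.1 l : ℤ) : ℝ))) * Real.exp (-QQ c q.2.1)) +
    ((((q.2.1 i - q.2.1 j : ℤ) : ℝ) ^ 2 * Real.exp (-QQ c q.2.1)) * (Real.exp (-QQ c q.1.1) *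
      Real.cos (θ * ((q.1.1 k - q.1.1 l : ℤ) : ℝ))) -
    ((((q.2.1 i - q.2.1 j : ℤ) : ℝ) ^ 2 * Real.exp (-QQ c q.2.1)) *
      Real.cos (θ * ((q.2.1 k - q.2.1 l : ℤ) : ℝ))) * Real.exp (-QQ c q.1.1))) := by
    intro q
    have e1 : Real.exp (-(QQ c (q.1.1 + q.2.1) / 2)) * Real.exp (-(QQ c (q.1.1 - q.2.1) / 2)) =
        Real.exp (-QQ c q.1.1) * Real.exp (-QQ c q.2.1) := by
      rw [← Real.exp_add, ← Real.exp_add]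
      congr 1
      linarith [QQ_para c q.1.1 q.2.1]
    have e2 := cos_sub_cos_dup (θ * ((q.1.1 k - q.1.1 l : ℤ) : ℝ)) (θ * ((q.2.1 k - q.2.1 l : ℤ) : ℝ))
    have e3 : (θ * ((q.1.1 k - q.1.1 l : ℤ) : ℝ) + θ * ((q.2.1 k - q.2.1 l : ℤ) : ℝ)) / 2 =
        θ * (((q.1.1 + q.2.1) k - (q.1.1 + q.2.1) l : ℤ) : ℝ) / 2 := by
      simp only [Pi.add_apply]; push_cast; ring
    have e4 : (θ * ((q.1.1 k - q.1.1 l : ℤ) : ℝ) - θ * ((q.2.1 k - q.2.1 l : ℤ) : ℝ)) / 2 =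
        θ * (((q.1.1 - q.2.1) k - (q.1.1 - q.2.1) l : ℤ) : ℝ) / 2 := by
      simp only [Pi.sub_apply]; push_cast; ring
    rw [e3, e4] at e2
    have e5 : (((q.1.1 + q.2.1) i - (q.1.1 + q.2.1) j : ℤ) : ℝ) *
        (((q.1.1 - q.2.1) i - (q.1.1 - q.2.1) j : ℤ) : ℝ) =
        ((q.1.1 i - q.1.1 j : ℤ) : ℝ) ^ 2 - ((q.2.1 i - q.2.1 j : ℤ) : ℝ) ^ 2 := by
      simp only [Pi.sub_apply, Pi.add_apply]; push_cast; ring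
    simp only [h]
    generalize (((q.1.1 + q.2.1) i - (q.1.1 + q.2.1) j : ℤ) : ℝ) = fa at *
    generalize (((q.1.1 - q.2.1) i - (q.1.1 - q.2.1) j : ℤ) : ℝ) = fb at *
    generalize Real.sin (θ * (((q.1.1 + q.2.1) k - (q.1.1 + q.2.1) l : ℤ) : ℝ) / 2) = sa at *
    generalize Real.sin (θ * (((q.1.1 - q.2.1) k - (q.1.1 - q.2.1) l : ℤ) : ℝ) / 2) = sb at *
    generalize Real.exp (-(QQ c (q.1.1 + q.2.1) / 2)) = wa at *
    generalize Real.exp (-(QQ c (q.1.1 - q.2.1) / 2)) = wb at *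
    calc fa * sa * wa * (fb * sb * wb) = (1 / 2) * ((fa * fb) * (2 * sa * sb) * (wa * wb)) := by ring
      _ = _ := by rw [e5, ← e2, e1]; ring
  have pS2 := hs_congr hpt pS
  rw [← pS2.tsum_eq]
  exact dup_nonneg x h hs pS2.summable

lemma swap_sum {X : Type*} {ι : Type} {u : X → ℝ} (hu0 : ∀ a, 0 ≤ u a) (hu : Summable u)
    {p θ : ι → ℝ} (hp : ∀ j, 0 ≤ p j) (sp : Summable p) {r : ℤ → ℝ}
    (hr : ∀ m : ℤ, r m = ∑' j, p j * Real.cos (θ j * m)) (g : X → ℤ) :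
    HasSum (fun j => p j * ∑' a, u a * Real.cos (θ j * (g a : ℝ))) (∑' a, u a * r (g a)) := by
  have sd : Summable (fun q : X × ι => u q.1 * (p q.2 * Real.cos (θ q.2 * (g q.1 : ℝ)))) := by
    refine Summable.of_norm_bounded (hu.mul_of_nonneg sp hu0 hp) (fun q => ?_)
    rw [norm_mul, Real.norm_eq_abs, abs_of_nonneg (hu0 _)]
    exact mul_le_mul_of_nonneg_left (abs_mul_cos_le (hp _) _) (hu0 _)
  have h1 : HasSum (fun a => u a * r (g a))
      (∑' q : X × ι, u q.1 * (p q.2 * Real.cos (θ q.2 * (g q.1 : ℝ)))) := by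
    refine sd.hasSum.prod_fiberwise (fun a => ?_)
    rw [hr]
    refine HasSum.mul_left _ (Summable.hasSum ?_)
    exact Summable.of_norm_bounded sp (fun j => abs_mul_cos_le (hp _) _)
  have sd' := (Equiv.prodComm ι X).hasSum_iff.mpr sd.hasSum
  rw [h1.tsum_eq]
  refine sd'.prod_fiberwise (fun j => ?_)
  have h2 : HasSum (fun a => u a * Real.cos (θ j * (g a : ℝ)))
      (∑' a, u a * Real.cos (θ j * (g a : ℝ))) :=
    (Summable.of_norm_bounded hu (fun a => abs_mul_cos_le (hu0 _) _)).hasSum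
  refine hs_congr (fun a => ?_) (h2.mul_left (p j))
  simp only [Function.comp, Equiv.prodComm_apply, Prod.swap]
  ring

lemma summ_W {V : Type*} [Fintype V] {c : V → V → ℝ} (hnn : ∀ i j, 0 ≤ c i j)
    (hconn : (supportGraph c).Connected) (x : V) :
    Summable (fun φ : AA x => Real.exp (-QQ c φ.1)) := by
  refine Summable.of_nonneg_of_le (fun φ => by positivity) (fun φ => ?_)
    (summ_main hnn hconn x x x)
  have : Real.exp (-QQ c φ.1) ≤ Real.exp (-(QQ c φ.1 / 2)) := by
    rw [Real.exp_le_exp]; linarith [QQ_nonneg hnn φ.1]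
  simpa using this

lemma summ_F {V : Type*} [Fintype V] {c : V → V → ℝ} (hnn : ∀ i j, 0 ≤ c i j)
    (hconn : (supportGraph c).Connected) (x i j : V) :
    Summable (fun φ : AA x => ((φ.1 i - φ.1 j : ℤ) : ℝ) ^ 2 * Real.exp (-QQ c φ.1)) := by
  refine Summable.of_nonneg_of_le (fun φ => by positivity) (fun φ => ?_)
    (summ_main hnn hconn x i j)
  have : Real.exp (-QQ c φ.1) ≤ Real.exp (-(QQ c φ.1 / 2)) := by
    rw [Real.exp_le_exp]; linarith [QQ_nonneg hnn φ.1]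
  nlinarith [mul_le_mul_of_nonneg_left this (sq_nonneg ((φ.1 i - φ.1 j : ℤ) : ℝ)),
      Real.exp_pos (-(QQ c φ.1 / 2))]

lemma cov_good {V : Type*} [Fintype V] {c : V → V → ℝ} (hnn : ∀ i j, 0 ≤ c i j)
    (hconn : (supportGraph c).Connected) (x i j k l : V) {r : ℤ → ℝ} (hr : GoodFn r) :
    (∑' φ : AA x, (((φ.1 i - φ.1 j : ℤ) : ℝ) ^ 2 * Real.exp (-QQ c φ.1)) *
      r (φ.1 k - φ.1 l)) * (∑' φ : AA x, Real.exp (-QQ c φ.1)) ≤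
    (∑' φ : AA x, ((φ.1 i - φ.1 j : ℤ) : ℝ) ^ 2 * Real.exp (-QQ c φ.1)) *
      (∑' φ : AA x, Real.exp (-QQ c φ.1) * r (φ.1 k - φ.1 l)) := by
  obtain ⟨ι, p, θ, hp, sp, hrm⟩ := hr
  have h1 := swap_sum (fun φ => by positivity) (summ_F hnn hconn x i j) hp sp hrm
    (fun φ : AA x => φ.1 k - φ.1 l)
  have h2 := swap_sum (fun φ => by positivity) (summ_W hnn hconn x) hp sp hrm
    (fun φ : AA x => φ.1 k - φ.1 l)
  refine hasSum_le (fun m => ?_) (h1.mul_right _) (h2.mul_left _)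
  have := mul_le_mul_of_nonneg_left (cov_cos hnn hconn x i j k l (θ m)) (hp m)
  linarith

lemma tsum_cfg {V : Type*} {c : V → V → ℝ} (hconn : (supportGraph c).Connected) (x : V)
    (F : (V → ℤ) → ℝ) : ∑' φ : GffConfig c x, F φ.val = ∑' φ : AA x, F φ.1 := by
  let e : GffConfig c x ≃ AA x := Equiv.subtypeEquivRight (fun φ =>
    ⟨fun h => h.1, fun h => ⟨h, fun v hv => absurd (hconn x v) hv⟩⟩)
  exact e.tsum_eq (fun φ : AA x => F φ.1)

lemma tsum_odd {V : Type*} (x : V) (F : (V → ℤ) → ℝ) (hF : ∀ φ, F (-φ) = -F φ) :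
    ∑' φ : AA x, F φ.1 = 0 := by
  let e : AA x ≃ AA x :=
    { toFun := fun φ => ⟨-φ.1, by simp [φ.2]⟩
      invFun := fun φ => ⟨-φ.1, by simp [φ.2]⟩
      left_inv := fun φ => by simp
      right_inv := fun φ => by simp }
  have h := e.tsum_eq (fun φ : AA x => F φ.1)
  have h2 : ∀ φ : AA x, F (e φ).1 = - F φ.1 := fun φ => hF φ.1
  simp_rw [h2] at h
  rw [tsum_neg] at h
  linarith

lemma QQ_neg {V : Type*} [Fintype V] (c : V → V → ℝ) (φ : V → ℤ) : QQ c (-φ) = QQ c φ := by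
  unfold QQ
  congr 1
  refine Finset.sum_congr rfl fun i _ => Finset.sum_congr rfl fun j _ => ?_
  simp only [Pi.neg_apply]
  push_cast
  ring

lemma rvar_eq {V : Type*} [Fintype V] {c : V → V → ℝ}
    (hconn : (supportGraph c).Connected) (x i j : V) :
    gffRVar c x (fun φ => ((φ i : ℤ) : ℝ) - ((φ j : ℤ) : ℝ)) =
    (∑' φ : AA x, ((φ.1 i - φ.1 j : ℤ) : ℝ) ^ 2 * Real.exp (-QQ c φ.1)) /
      (∑' φ : AA x, Real.exp (-QQ c φ.1)) := by
  unfold gffRVar gffZ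
  rw [tsum_cfg hconn x (fun φ => (((φ i : ℤ) : ℝ) - ((φ j : ℤ) : ℝ)) ^ 2 * gffWeight c φ),
    tsum_cfg hconn x (fun φ => (((φ i : ℤ) : ℝ) - ((φ j : ℤ) : ℝ)) * gffWeight c φ),
    tsum_cfg hconn x (fun φ => gffWeight c φ),
    tsum_odd x (fun φ => (((φ i : ℤ) : ℝ) - ((φ j : ℤ) : ℝ)) * gffWeight c φ)]
  · simp only [zero_div, ne_eq, OfNat.ofNat_ne_zero, not_false_eq_true, zero_pow, sub_zero,
      Int.cast_sub]
    rfl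
  · intro φ
    have : gffWeight c (-φ) = gffWeight c φ := congrArg (fun t => Real.exp (-t)) (QQ_neg c φ)
    rw [this]
    simp only [Pi.neg_apply]
    push_cast
    ring

lemma rvar1_eq {V : Type*} [Fintype V] {c : V → V → ℝ} (x i : V) :
    gffRVar c x (fun φ => ((φ i : ℤ) : ℝ)) =
    gffRVar c x (fun φ => ((φ i : ℤ) : ℝ) - ((φ x : ℤ) : ℝ)) := by
  unfold gffRVar
  have : ∀ φ : GffConfig c x, ((φ.val x : ℤ) : ℝ) = 0 := fun φ => by
    rw [φ.2.1]; simp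
  simp only [this, sub_zero]

def splitE {V : Type*} (x : V) (N : ℕ) :
    AA x × (Fin N → ℤ) ≃ AA (Sum.inl x : V ⊕ Fin N) where
  toFun q := ⟨Sum.elim q.1.1 q.2, by simp [q.1.2]⟩
  invFun ψ := (⟨fun v => ψ.1 (Sum.inl v), ψ.2⟩, fun k => ψ.1 (Sum.inr k))
  left_inv q := by simp
  right_inv ψ := by
    apply Subtype.ext
    funext v
    rcases v with v | v <;> simp

lemma rr_sum (n : ℕ) (Λ : ℝ) (t : Fin (n + 1) → ℤ) :
    ∑ k : Fin (n + 1), ∑ l : Fin (n + 1),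
      (if (k : ℕ) + 1 = (l : ℕ) ∨ (l : ℕ) + 1 = (k : ℕ) then Λ else 0) *
        ((t k - t l : ℤ) : ℝ) ^ 2 =
    2 * Λ * ∑ k : Fin n, ((t k.castSucc - t k.succ : ℤ) : ℝ) ^ 2 := by
  have hS : ∑ k : Fin (n + 1), ∑ l : Fin (n + 1),
      (if (k : ℕ) + 1 = (l : ℕ) then Λ else 0) * ((t k - t l : ℤ) : ℝ) ^ 2 =
      Λ * ∑ k : Fin n, ((t k.castSucc - t k.succ : ℤ) : ℝ) ^ 2 := by
    rw [Fin.sum_univ_castSucc, Finset.mul_sum]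
    have h0 : ∑ l : Fin (n + 1), (if ((Fin.last n : Fin (n + 1)) : ℕ) + 1 = (l : ℕ) then Λ else 0) *
        ((t (Fin.last n) - t l : ℤ) : ℝ) ^ 2 = 0 := by
      refine Finset.sum_eq_zero fun l _ => ?_
      rw [if_neg (by have := l.2; simp only [Fin.val_last]; omega), zero_mul]
    rw [h0, add_zero]
    refine Finset.sum_congr rfl fun k _ => ?_
    rw [Finset.sum_eq_single k.succ]
    · simp
    · intro l _ hl
      rw [if_neg, zero_mul]
      intro h
      apply hl
      apply Fin.ext
      simp at h ⊢
      omega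
    · simp
  have hT : ∑ k : Fin (n + 1), ∑ l : Fin (n + 1),
      (if (l : ℕ) + 1 = (k : ℕ) then Λ else 0) * ((t k - t l : ℤ) : ℝ) ^ 2 =
      Λ * ∑ k : Fin n, ((t k.castSucc - t k.succ : ℤ) : ℝ) ^ 2 := by
    rw [Finset.sum_comm, ← hS]
    refine Finset.sum_congr rfl fun k _ => Finset.sum_congr rfl fun l _ => ?_
    push_cast
    ring
  rw [two_mul, add_mul]
  nth_rewrite 1 [← hS]
  rw [← hT, ← Finset.sum_add_distrib]
  refine Finset.sum_congr rfl fun k _ => ?_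
  rw [← Finset.sum_add_distrib]
  refine Finset.sum_congr rfl fun l _ => ?_
  rw [← add_mul]
  congr 1
  by_cases h1 : (k : ℕ) + 1 = (l : ℕ)
  · have : ¬ ((l : ℕ) + 1 = (k : ℕ)) := by omega
    simp [h1, this]
  · simp [h1]

lemma lr_sum {V : Type*} [Fintype V] [DecidableEq V] (n : ℕ) (Λ : ℝ) (y z : V) (hyz : y ≠ z)
    (φ : V → ℤ) (t : Fin (n + 1) → ℤ) :
    ∑ a : V, ∑ k : Fin (n + 1),
      (if (a = y ∧ (k : ℕ) = 0) ∨ (a = z ∧ (k : ℕ) = n + 1 - 1) then Λ else 0) *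
        ((φ a - t k : ℤ) : ℝ) ^ 2 =
    Λ * (((φ y - t 0 : ℤ) : ℝ) ^ 2 + ((φ z - t (Fin.last n) : ℤ) : ℝ) ^ 2) := by
  have h : ∀ (a : V) (k : Fin (n + 1)),
      (if (a = y ∧ (k : ℕ) = 0) ∨ (a = z ∧ (k : ℕ) = n + 1 - 1) then Λ else 0) *
        ((φ a - t k : ℤ) : ℝ) ^ 2 =
      (if a = y then (if k = 0 then Λ * ((φ a - t k : ℤ) : ℝ) ^ 2 else 0) else 0) +
      (if a = z then (if k = Fin.last n then Λ * ((φ a - t k : ℤ) : ℝ) ^ 2 else 0) else 0) := by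
    intro a k
    have e1 : (k : ℕ) = 0 ↔ k = 0 := by rw [Fin.ext_iff]; simp
    have e2 : (k : ℕ) = n + 1 - 1 ↔ k = Fin.last n := by rw [Fin.ext_iff]; simp
    simp only [e1, e2]
    by_cases ha : a = y
    · have : a ≠ z := ha ▸ hyz
      by_cases hk : k = 0 <;> simp [ha, hk, hyz]
    · by_cases ha2 : a = z <;> by_cases hk : k = Fin.last n <;> simp [ha2, hk, hyz.symm, ha]
  simp_rw [h]
  simp only [Finset.sum_add_distrib]
  have g1 : ∀ (w : V) (m : Fin (n + 1)), ∑ a : V, ∑ k : Fin (n + 1),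
      (if a = w then (if k = m then Λ * ((φ a - t k : ℤ) : ℝ) ^ 2 else 0) else 0) =
      Λ * ((φ w - t m : ℤ) : ℝ) ^ 2 := by
    intro w m
    rw [Finset.sum_eq_single w]
    · simp
    · intro b _ hb; simp [hb]
    · simp
  rw [g1, g1]
  ring

lemma ll_sum {V : Type*} [Fintype V] [DecidableEq V] (c : V → V → ℝ)
    (hsym : ∀ i j, c i j = c j i) (y z : V) (hyz : y ≠ z) (φ : V → ℤ) :
    ∑ a : V, ∑ b : V, (if (a = y ∧ b = z) ∨ (a = z ∧ b = y) then 0 else c a b) *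
        ((φ a - φ b : ℤ) : ℝ) ^ 2 =
    ∑ a : V, ∑ b : V, c a b * ((φ a - φ b : ℤ) : ℝ) ^ 2 -
      2 * c y z * ((φ y - φ z : ℤ) : ℝ) ^ 2 := by
  have h : ∀ (a b : V),
      (if (a = y ∧ b = z) ∨ (a = z ∧ b = y) then 0 else c a b) * ((φ a - φ b : ℤ) : ℝ) ^ 2 =
      c a b * ((φ a - φ b : ℤ) : ℝ) ^ 2 -
      ((if a = y then (if b = z then c a b * ((φ a - φ b : ℤ) : ℝ) ^ 2 else 0) else 0) +
      (if a = z then (if b = y then c a b * ((φ a - φ b : ℤ) : ℝ) ^ 2 else 0) else 0)) := by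
    intro a b
    by_cases ha : a = y
    · by_cases hb : b = z <;> simp [ha, hb, hyz]
    · by_cases ha2 : a = z <;> by_cases hb : b = y <;> simp [ha2, hb, hyz.symm, ha]
  simp_rw [h]
  simp only [Finset.sum_add_distrib, Finset.sum_sub_distrib]
  have g1 : ∀ (w m : V), ∑ a : V, ∑ k : V,
      (if a = w then (if k = m then c a k * ((φ a - φ k : ℤ) : ℝ) ^ 2 else 0) else 0) =
      c w m * ((φ w - φ m : ℤ) : ℝ) ^ 2 := by
    intro w m
    rw [Finset.sum_eq_single w]
    · simp
    · intro b _ hb; simp [hb]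
    · simp
  rw [g1, g1, hsym z y]
  push_cast
  ring

lemma QQ_path {V : Type*} [Fintype V] [DecidableEq V] (c : V → V → ℝ)
    (hsym : ∀ i j, c i j = c j i) (y z : V) (hyz : y ≠ z) (N : ℕ) (hN : 1 ≤ N)
    (φ : V → ℤ) (t : Fin N → ℤ) :
    QQ (addPathCond c y z N) (Sum.elim φ t) =
      QQ c φ - c y z * ((φ y - φ z : ℤ) : ℝ) ^ 2 +
        ((N : ℝ) + 1) * c y z * pathE N (φ y) (φ z) t := by
  obtain ⟨n, rfl⟩ : ∃ n, N = n + 1 := ⟨N - 1, by omega⟩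
  have e1 := ll_sum c hsym y z hyz φ
  have e2 := lr_sum n ((((n + 1 : ℕ) : ℝ) + 1) * c y z) y z hyz φ t
  have e3 := rr_sum n ((((n + 1 : ℕ) : ℝ) + 1) * c y z) t
  have e4 : ∑ k : Fin (n + 1), ∑ a : V,
      (if (a = y ∧ (k : ℕ) = 0) ∨ (a = z ∧ (k : ℕ) = n + 1 - 1) then
        (((n + 1 : ℕ) : ℝ) + 1) * c y z else 0) * ((t k - φ a : ℤ) : ℝ) ^ 2 =
    (((n + 1 : ℕ) : ℝ) + 1) * c y z *
      (((φ y - t 0 : ℤ) : ℝ) ^ 2 + ((φ z - t (Fin.last n) : ℤ) : ℝ) ^ 2) := by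
    rw [← e2, Finset.sum_comm]
    refine Finset.sum_congr rfl fun k _ => Finset.sum_congr rfl fun l _ => ?_
    push_cast
    ring
  rw [pathE_closed]
  unfold QQ
  simp only [Fintype.sum_sum_type, Sum.elim_inl, Sum.elim_inr, addPathCond, Finset.sum_add_distrib]
  rw [e1, e2, e3, e4]
  ring

lemma path_conn {V : Type*} [Fintype V] [DecidableEq V] (c : V → V → ℝ)
    (hconn : (supportGraph c).Connected)
    (hsym : ∀ i j, c i j = c j i) (y z : V) (hedge : 0 < c y z) (N : ℕ) (hN : 1 ≤ N)
    (x : V) : (supportGraph (addPathCond c y z N)).Connected := by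
  have hΛ : 0 < ((N : ℝ) + 1) * c y z := by positivity
  have adj : ∀ u v : V ⊕ Fin N, u ≠ v → 0 < addPathCond c y z N u v →
      (supportGraph (addPathCond c y z N)).Reachable u v := by
    intro u v huv h
    apply SimpleGraph.Adj.reachable
    rw [supportGraph, SimpleGraph.fromRel_adj]
    exact ⟨huv, Or.inl h⟩
  have hyk : ∀ (k : ℕ) (hk : k < N),
      (supportGraph (addPathCond c y z N)).Reachable (Sum.inl y) (Sum.inr ⟨k, hk⟩) := by
    intro k
    induction k with
    | zero =>
      intro hk
      refine adj _ _ (by simp) ?_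
      simp [addPathCond, hΛ]
    | succ k ih =>
      intro hk
      refine (ih (by omega)).trans (adj _ _ ?_ ?_)
      · simp
      · simp [addPathCond, hΛ]
  have hyz' : (supportGraph (addPathCond c y z N)).Reachable (Sum.inl y) (Sum.inl z) := by
    refine (hyk (N - 1) (by omega)).trans (adj _ _ (by simp) ?_)
    simp [addPathCond, hΛ]
  have hV : ∀ a b : V, (supportGraph c).Reachable a b →
      (supportGraph (addPathCond c y z N)).Reachable (Sum.inl a) (Sum.inl b) := by
    intro a b h
    rw [SimpleGraph.reachable_iff_reflTransGen] at h
    induction h with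
    | refl => exact SimpleGraph.Reachable.refl _
    | @tail p q _ hpq ih =>
      refine ih.trans ?_
      rw [supportGraph, SimpleGraph.fromRel_adj] at hpq
      by_cases h1 : (p = y ∧ q = z) ∨ (p = z ∧ q = y)
      · rcases h1 with ⟨rfl, rfl⟩ | ⟨rfl, rfl⟩
        · exact hyz'
        · exact hyz'.symm
      · refine adj _ _ (by simpa using hpq.1) ?_
        simp only [addPathCond]
        rw [if_neg h1]
        rcases hpq.2 with h | h
        · exact h
        · rw [hsym]; exact h
  have hall : ∀ u : V ⊕ Fin N,
      (supportGraph (addPathCond c y z N)).Reachable (Sum.inl x) u := by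
    rintro (v | k)
    · exact hV _ _ (hconn x v)
    · exact (hV _ _ (hconn x y)).trans (hyk k.1 k.2)
  haveI : Nonempty (V ⊕ Fin N) := ⟨Sum.inl x⟩
  exact ⟨fun u v => (hall u).symm.trans (hall v)⟩

lemma path_nn {V : Type*} [DecidableEq V] (c : V → V → ℝ)
    (hnn : ∀ i j, 0 ≤ c i j) (y z : V) (N : ℕ) (u v : V ⊕ Fin N) :
    0 ≤ addPathCond c y z N u v := by
  have h := hnn y z
  have hΛ : 0 ≤ ((N : ℝ) + 1) * c y z := by positivity
  rcases u with a | k <;> rcases v with b | l <;> simp only [addPathCond] <;> split_ifs <;>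
    first | exact le_rfl | exact hΛ | exact hnn _ _

lemma main_rvar {V : Type*} [Fintype V] [DecidableEq V] (x : V) (c : V → V → ℝ)
    (hsym : ∀ i j, c i j = c j i) (hnn : ∀ i j, 0 ≤ c i j)
    (hconn : (supportGraph c).Connected)
    (y z : V) (hyz : y ≠ z) (hedge : 0 < c y z)
    (N : ℕ) (hN : 1 ≤ N) (i j : V) :
    gffRVar (addPathCond c y z N) (Sum.inl x)
      (fun φ => ((φ (Sum.inl i) : ℤ) : ℝ) - ((φ (Sum.inl j) : ℤ) : ℝ)) ≤
    gffRVar c x (fun φ => ((φ i : ℤ) : ℝ) - ((φ j : ℤ) : ℝ)) := by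
  have hconn' := path_conn c hconn hsym y z hedge N hN x
  have hnn' := path_nn c hnn y z N
  obtain ⟨r, hr, hsr⟩ := path_sum (Λ := ((N : ℝ) + 1) * c y z) (by positivity) N
  have hfib : ∀ φ : V → ℤ, HasSum (fun t : Fin N → ℤ =>
      Real.exp (-QQ (addPathCond c y z N) (Sum.elim φ t)))
      (Real.exp (-QQ c φ) * r (φ y - φ z)) := by
    intro φ
    have h := (hsr (φ y) (φ z)).mul_left
      (Real.exp (-QQ c φ + c y z * ((φ y - φ z : ℤ) : ℝ) ^ 2))
    have e : Real.exp (-QQ c φ + c y z * ((φ y - φ z : ℤ) : ℝ) ^ 2) *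
        (Real.exp (-(((N : ℝ) + 1) * c y z / (N + 1)) * ((φ y - φ z : ℤ) : ℝ) ^ 2) *
          r (φ y - φ z)) = Real.exp (-QQ c φ) * r (φ y - φ z) := by
      rw [← mul_assoc, ← Real.exp_add]
      congr 2
      field_simp
      ring
    rw [e] at h
    refine hs_congr (fun t => ?_) h
    rw [← Real.exp_add, QQ_path c hsym y z hyz N hN]
    congr 1
    ring
  have hZ : ∑' ψ : AA (Sum.inl x : V ⊕ Fin N), Real.exp (-QQ (addPathCond c y z N) ψ.1) =
      ∑' φ : AA x, Real.exp (-QQ c φ.1) * r (φ.1 y - φ.1 z) := by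
    have s := (splitE x N).hasSum_iff.mpr (summ_W hnn' hconn' (Sum.inl x)).hasSum
    exact (s.prod_fiberwise (fun φ => hfib φ.1)).tsum_eq.symm
  have hF : ∑' ψ : AA (Sum.inl x : V ⊕ Fin N),
      ((ψ.1 (Sum.inl i) - ψ.1 (Sum.inl j) : ℤ) : ℝ) ^ 2 *
        Real.exp (-QQ (addPathCond c y z N) ψ.1) =
      ∑' φ : AA x, (((φ.1 i - φ.1 j : ℤ) : ℝ) ^ 2 * Real.exp (-QQ c φ.1)) *
        r (φ.1 y - φ.1 z) := by
    have s := (splitE x N).hasSum_iff.mpr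
      (summ_F hnn' hconn' (Sum.inl x) (Sum.inl i) (Sum.inl j)).hasSum
    refine (s.prod_fiberwise (fun φ => ?_)).tsum_eq.symm
    rw [mul_assoc]
    exact (hfib φ.1).mul_left (((φ.1 i - φ.1 j : ℤ) : ℝ) ^ 2)
  rw [rvar_eq hconn, rvar_eq hconn']
  have cov := cov_good hnn hconn x i j y z hr
  rw [← hF, ← hZ] at cov
  have hpos : ∀ {W : Type _} [Fintype W] (d : W → W → ℝ) (w : W),
      Summable (fun φ : AA w => Real.exp (-QQ d φ.1)) → 0 < ∑' φ : AA w, Real.exp (-QQ d φ.1) :=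
    fun d w hs => hs.tsum_pos (fun φ => (Real.exp_pos _).le) ⟨0, rfl⟩ (Real.exp_pos _)
  rw [div_le_div_iff₀ (hpos _ _ (summ_W hnn' hconn' _)) (hpos _ _ (summ_W hnn hconn x))]
  exact cov

/-- **Monotonicity under addition of `N` vertices on an edge.**
Let `G = (V,E,x)` be a finite connected rooted graph with conductances `c ∈ (0,∞)^E`
(encoded as a symmetric nonnegative function whose support graph is connected), let
`N ∈ ℕ*` and let `yz ∈ E` be an edge. Replacing the edge `yz` by a path
`y, t₁, …, t_N, z` whose edges all carry the conductance `(N+1)·λ_{yz}` decreases the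
variance of every height `φ(i)`, `i ∈ V`, and of every height difference `φ(i) − φ(j)`,
`i, j ∈ V`. -/
theorem gff_variance_monotone_path_addition
    {V : Type*} [Fintype V] [DecidableEq V] (x : V) (c : V → V → ℝ)
    (hsym : ∀ i j, c i j = c j i) (hnn : ∀ i j, 0 ≤ c i j)
    (hconn : (supportGraph c).Connected)
    (y z : V) (hyz : y ≠ z) (hedge : 0 < c y z)
    (N : ℕ) (hN : 1 ≤ N) :
    (∀ i : V,
        gffVar1 (addPathCond c y z N) (Sum.inl x) (Sum.inl i) ≤ gffVar1 c x i) ∧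
      (∀ i j : V,
        gffVar2 (addPathCond c y z N) (Sum.inl x) (Sum.inl i) (Sum.inl j)
          ≤ gffVar2 c x i j) := by
  have hconn' := path_conn c hconn hsym y z hedge N hN x
  constructor
  · intro i
    unfold gffVar1
    rw [if_pos (hconn' _ _), if_pos (hconn _ _), rvar1_eq, rvar1_eq]
    exact ENNReal.ofReal_le_ofReal (main_rvar x c hsym hnn hconn y z hyz hedge N hN i x)
  · intro i j
    unfold gffVar2
    rw [if_pos ⟨hconn' _ _, hconn' _ _⟩, if_pos ⟨hconn _ _, hconn _ _⟩]
    exact ENNReal.ofReal_le_ofReal (main_rvar x c hsym hnn hconn y z hyz hedge N hN i j)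
end

section
/- For every exponent q ∈ (0,2], there exists a Borel probability measure μ_q on (0,∞) such that for every real number x, e^{−|x|^q} = ∫_{(0,∞)} e^{−λx²} dμ_q(λ). That is, the power-law interaction x ↦ e^{−|x|^q} is a mixture of centred Gaussian densities. -/
open MeasureTheory Filter Topology Set

lemma gd_integrable (β t : ℝ) (hβ : 1 < β) (ht : 0 ≤ t) :
    IntegrableOn (fun v : ℝ => 1 - Real.exp (-(t * |v| ^ (-β)))) (Ioi 0) := by
  have hm : Measurable (fun v : ℝ => 1 - Real.exp (-(t * |v| ^ (-β)))) := by fun_prop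
  have h0 : ∀ v : ℝ, 0 ≤ t * |v| ^ (-β) := fun v => by positivity
  have h1 : ∀ v : ℝ, 0 ≤ 1 - Real.exp (-(t * |v| ^ (-β))) := fun v => by
    have := Real.exp_le_one_iff.2 (neg_nonpos.2 (h0 v)); linarith
  rw [← Ioc_union_Ioi_eq_Ioi (zero_le_one' ℝ)]
  refine IntegrableOn.union ?_ ?_
  · refine Measure.integrableOn_of_bounded (M := 1) (by simp) hm.aestronglyMeasurable ?_
    refine Eventually.of_forall fun v => ?_
    rw [Real.norm_of_nonneg (h1 v)]
    have := Real.exp_pos (-(t * |v| ^ (-β))); linarith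
  · have := (integrableOn_Ioi_rpow_of_lt (a := -β) (by linarith) (zero_lt_one' ℝ)).const_mul t
    refine Integrable.mono' this hm.aestronglyMeasurable ?_
    refine (ae_restrict_iff' measurableSet_Ioi).2 (Eventually.of_forall fun v hv => ?_)
    rw [Real.norm_of_nonneg (h1 v)]
    have := Real.add_one_le_exp (-(t * |v| ^ (-β)))
    have hv' : (1:ℝ) < v := hv
    rw [abs_of_pos (by linarith)] at *
    linarith

lemma gd_pos (β : ℝ) (hβ : 1 < β) :
    0 < ∫ v in Ioi (0:ℝ), (1 - Real.exp (-((1:ℝ) * |v| ^ (-β)))) := by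
  have h1 : ∀ v : ℝ, 0 ≤ 1 - Real.exp (-((1:ℝ) * |v| ^ (-β))) := fun v => by
    have := Real.exp_le_one_iff.2 (neg_nonpos.2 (show 0 ≤ (1:ℝ) * |v| ^ (-β) by positivity)); linarith
  rw [setIntegral_pos_iff_support_of_nonneg_ae (Eventually.of_forall h1)
    (gd_integrable β 1 hβ zero_le_one)]
  have : Ioi (0:ℝ) ⊆ (Function.support fun v : ℝ => 1 - Real.exp (-((1:ℝ) * |v| ^ (-β)))) ∩ Ioi 0 := by
    intro v hv
    refine ⟨?_, hv⟩
    have hv' : (0:ℝ) < v := hv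
    have : Real.exp (-((1:ℝ) * |v| ^ (-β))) < 1 := (Real.exp_lt_one_iff).2 (by
      have : 0 < |v| ^ (-β) := by positivity
      linarith)
    simp only [Function.mem_support]
    linarith
  refine lt_of_lt_of_le ?_ (measure_mono this)
  simp

lemma gd_scale (β t : ℝ) (hβ : 1 < β) (ht : 0 ≤ t) :
    ∫ v in Ioi (0:ℝ), (1 - Real.exp (-(t * |v| ^ (-β)))) =
    t ^ (1 / β) * ∫ v in Ioi (0:ℝ), (1 - Real.exp (-((1:ℝ) * |v| ^ (-β)))) := by
  rcases ht.eq_or_lt with rfl | ht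
  · have : β ≠ 0 := by linarith
    simp [Real.zero_rpow, this]
  have hs : 0 < t ^ (1/β) := by positivity
  have := integral_comp_mul_left_Ioi (fun v : ℝ => 1 - Real.exp (-(t * |v| ^ (-β)))) 0 hs
  rw [mul_zero, smul_eq_mul, inv_mul_eq_div, eq_div_iff hs.ne'] at this
  rw [← this, mul_comm]
  congr 2
  ext v
  rw [abs_mul, abs_of_pos hs, Real.mul_rpow hs.le (abs_nonneg _), ← Real.rpow_mul ht.le, ← mul_assoc]
  have : 1 / β * -β = -1 := by field_simp
  rw [this, Real.rpow_neg_one, mul_inv_cancel₀ ht.ne']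

/-- closure under limits -/
lemma gd_limit (a : ℝ) (ha : 0 < a) (μ : ℕ → Measure ℝ) (hp : ∀ n, IsProbabilityMeasure (μ n))
    (h0 : ∀ n, μ n (Iio 0) = 0)
    (hb : ∀ n, ∀ t : ℝ, 0 ≤ t → 1 - t ^ a ≤ ∫ l, Real.exp (-(l * t)) ∂μ n)
    (hl : ∀ t : ℝ, 0 ≤ t →
      Tendsto (fun n => ∫ l, Real.exp (-(l * t)) ∂μ n) atTop (𝓝 (Real.exp (-(t ^ a))))) :
    ∃ μ : Measure ℝ, IsProbabilityMeasure μ ∧ μ {l : ℝ | l ≤ 0} = 0 ∧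
      ∀ t : ℝ, 0 ≤ t → Real.exp (-(t ^ a)) = ∫ l, Real.exp (-(l * t)) ∂μ := by
  have hae : ∀ n, ∀ᵐ l ∂μ n, 0 ≤ l := fun n => by
    rw [ae_iff]; convert h0 n using 2; ext; simp
  have hint : ∀ (ν : Measure ℝ) [IsProbabilityMeasure ν], (∀ᵐ l ∂ν, 0 ≤ l) → ∀ t : ℝ, 0 ≤ t →
      Integrable (fun l => Real.exp (-(l * t))) ν := by
    intro ν _ hν t ht
    refine Integrable.mono' (integrable_const (1:ℝ)) (by fun_prop) ?_
    filter_upwards [hν] with l hl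
    rw [Real.norm_of_nonneg (Real.exp_pos _).le, Real.exp_le_one_iff]
    have := mul_nonneg hl ht; linarith
  let P : ℕ → ProbabilityMeasure ℝ := fun n => ⟨μ n, hp n⟩
  have hE : 0 < 1 - Real.exp (-1) := by
    have := (Real.exp_lt_one_iff).2 (show (-1:ℝ) < 0 by norm_num); linarith
  have htight : IsTightMeasureSet {((ν : ProbabilityMeasure ℝ) : Measure ℝ) | ν ∈ range P} := by
    apply isTightMeasureSet_of_tendsto_measure_norm_gt
    have key : ∀ r : ℝ, 0 < r → ∀ n, μ n {x | r < ‖x‖} ≤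
        ENNReal.ofReal ((r⁻¹) ^ a / (1 - Real.exp (-1))) := by
      intro r hr n
      have := hp n
      have h2 : (μ n).real {x | r < ‖x‖} * (1 - Real.exp (-1)) ≤ (r⁻¹) ^ a := by
        have h3 := hb n r⁻¹ (by positivity)
        have hi := hint (μ n) (hae n) r⁻¹ (by positivity)
        have hms : MeasurableSet {x : ℝ | r < ‖x‖} := measurableSet_lt measurable_const measurable_norm
        have h4 : ∫ l, {x : ℝ | r < ‖x‖}.indicator (fun _ => 1 - Real.exp (-1)) l ∂μ n ≤
            ∫ l, (1 - Real.exp (-(l * r⁻¹))) ∂μ n := by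
          refine integral_mono_ae ((integrable_const _).indicator hms) ((integrable_const _).sub hi) ?_
          filter_upwards [hae n] with l hl
          by_cases hlr : r < ‖l‖
          · rw [indicator_of_mem (by exact hlr)]
            rw [Real.norm_of_nonneg hl] at hlr
            have : 1 ≤ l * r⁻¹ := by
              rw [← div_eq_mul_inv, le_div_iff₀ hr]; linarith
            have := Real.exp_le_exp.2 (neg_le_neg this)
            linarith
          · rw [indicator_of_notMem (by exact hlr)]
            have : 0 ≤ l * r⁻¹ := by positivity
            have := Real.exp_le_one_iff.2 (neg_nonpos.2 this)
            linarith
          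
        rw [integral_indicator_const _ hms, integral_sub (integrable_const _) hi] at h4
        simp only [smul_eq_mul, integral_const, probReal_univ, mul_one] at h4
        linarith
      rw [← ofReal_measureReal]
      exact ENNReal.ofReal_le_ofReal ((le_div_iff₀ hE).2 h2)
    have hlim : Tendsto (fun r : ℝ => ENNReal.ofReal ((r⁻¹) ^ a / (1 - Real.exp (-1)))) atTop (𝓝 0) := by
      have h5 : Tendsto (fun r : ℝ => (r⁻¹) ^ a / (1 - Real.exp (-1))) atTop (𝓝 0) := by
        have := ((tendsto_inv_atTop_zero (𝕜 := ℝ)).rpow_const (p := a) (Or.inr ha.le)).div_const (1 - Real.exp (-1))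
        simpa [Real.zero_rpow ha.ne'] using this
      simpa using ENNReal.tendsto_ofReal h5
    refine tendsto_of_tendsto_of_tendsto_of_le_of_le' tendsto_const_nhds hlim
      (Eventually.of_forall fun _ => zero_le) ?_
    filter_upwards [eventually_gt_atTop 0] with r hr
    refine iSup₂_le ?_
    rintro _ ⟨_, ⟨n, rfl⟩, rfl⟩
    exact key r hr n
  have hcomp := isCompact_closure_of_isTightMeasureSet htight
  let U : Ultrafilter ℕ := hyperfilter ℕ
  have hU : (U : Filter ℕ) ≤ atTop := Nat.hyperfilter_le_atTop
  obtain ⟨ν, -, hν⟩ := hcomp.ultrafilter_le_nhds (U.map P) (by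
    rw [le_principal_iff]
    exact Filter.mem_map.2 (Filter.univ_mem' (fun n => subset_closure (mem_range_self n))))
  have hν' : Tendsto P U (𝓝 ν) := hν
  have hneg : (ν : Measure ℝ) (Iio 0) = 0 := by
    have := ProbabilityMeasure.le_liminf_measure_open_of_tendsto hν' (isOpen_Iio (a := (0:ℝ)))
    have h6 : ∀ n, (P n : Measure ℝ) (Iio 0) = 0 := h0
    simp only [h6] at this
    simpa using this
  have hνae : ∀ᵐ l ∂(ν : Measure ℝ), 0 ≤ l := by
    rw [ae_iff]; convert hneg using 2; ext; simp
  have hL : ∀ t : ℝ, 0 ≤ t → Real.exp (-(t ^ a)) = ∫ l, Real.exp (-(l * t)) ∂(ν : Measure ℝ) := by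
    intro t ht
    let f : BoundedContinuousFunction ℝ ℝ := BoundedContinuousFunction.ofNormedAddCommGroup
      (fun l => Real.exp (-(max l 0 * t))) (by fun_prop) 1 (by
        intro l
        rw [Real.norm_of_nonneg (Real.exp_pos _).le, Real.exp_le_one_iff]
        have := mul_nonneg (le_max_right l 0) ht; linarith)
    have h7 := (ProbabilityMeasure.tendsto_iff_forall_integral_tendsto.1 hν') f
    have h8 : ∀ (m : Measure ℝ), (∀ᵐ l ∂m, 0 ≤ l) → ∫ l, f l ∂m = ∫ l, Real.exp (-(l * t)) ∂m := by
      intro m hm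
      refine integral_congr_ae ?_
      filter_upwards [hm] with l hl
      simp [f, max_eq_left hl]
    rw [h8 _ hνae] at h7
    have h9 : ∀ n, ∫ l, f l ∂(P n : Measure ℝ) = ∫ l, Real.exp (-(l * t)) ∂(μ n) := fun n => h8 _ (hae n)
    simp only [h9] at h7
    exact tendsto_nhds_unique ((hl t ht).mono_left hU) h7
  refine ⟨ν, inferInstance, ?_, hL⟩
  have hz : (ν : Measure ℝ) {0} = 0 := by
    have h10 : ∀ t : ℝ, 0 ≤ t → (ν : Measure ℝ).real {0} ≤ Real.exp (-(t ^ a)) := by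
      intro t ht
      rw [hL t ht]
      have : (ν : Measure ℝ).real {0} = ∫ l, ({0} : Set ℝ).indicator (fun _ => (1:ℝ)) l ∂(ν : Measure ℝ) := by
        rw [integral_indicator_const _ (measurableSet_singleton _)]; simp
      rw [this]
      refine integral_mono ((integrable_const _).indicator (measurableSet_singleton _))
        (hint _ hνae t ht) ?_
      intro l
      by_cases h : l = 0
      · simp [h]
      · simp [h]; positivity
    have h11 : Tendsto (fun t : ℝ => Real.exp (-(t ^ a))) atTop (𝓝 0) :=
      Real.tendsto_exp_neg_atTop_nhds_zero.comp (tendsto_rpow_atTop ha)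
    have h12 : (ν : Measure ℝ).real {0} ≤ 0 := ge_of_tendsto h11 (by
      filter_upwards [eventually_ge_atTop 0] with t ht using h10 t ht)
    rw [← ofReal_measureReal]
    exact ENNReal.ofReal_eq_zero.2 h12
  have : {l : ℝ | l ≤ 0} = Iio 0 ∪ {0} := by ext x; simp [le_iff_lt_or_eq]
  rw [this]
  exact measure_union_null hneg hz

lemma gd_stable (β : ℝ) (hβ : 1 < β) :
    ∃ μ : Measure ℝ, IsProbabilityMeasure μ ∧ μ {l : ℝ | l ≤ 0} = 0 ∧
      ∀ t : ℝ, 0 ≤ t → Real.exp (-(t ^ (1 / β))) = ∫ l, Real.exp (-(l * t)) ∂μ := by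
  have hβ0 : β ≠ 0 := by linarith
  obtain ⟨C, hC⟩ : ∃ C, C = ∫ v in Ioi (0:ℝ), (1 - Real.exp (-((1:ℝ) * |v| ^ (-β)))) := ⟨_, rfl⟩
  have hCpos : 0 < C := hC ▸ gd_pos β hβ
  obtain ⟨c, hc⟩ : ∃ c, c = C ^ (-β) := ⟨_, rfl⟩
  have hcpos : 0 < c := by rw [hc]; positivity
  have hG : ∀ t : ℝ, 0 ≤ t →
      ∫ v in Ioi (0:ℝ), (1 - Real.exp (-((t * c) * |v| ^ (-β)))) = t ^ (1 / β) := by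
    intro t ht
    rw [gd_scale β _ hβ (by positivity), ← hC, Real.mul_rpow ht hcpos.le, hc, ← Real.rpow_mul hCpos.le]
    have : -β * (1 / β) = -1 := by field_simp
    rw [this, Real.rpow_neg_one, mul_assoc, inv_mul_cancel₀ hCpos.ne', mul_one]
  let U : Measure ℝ := volume.restrict (Ioc 0 1)
  have : IsProbabilityMeasure U := ⟨by simp [U]⟩
  let X : (n : ℕ) → (Fin n → ℝ) → ℝ := fun n u => ∑ i, c * |(n:ℝ) * u i| ^ (-β)
  have hX : ∀ n, Measurable (X n) := fun n => by fun_prop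
  have hXn : ∀ n u, 0 ≤ X n u := fun n u => Finset.sum_nonneg fun i _ => by positivity
  let g : ℕ → ℝ → ℝ := fun n t => ∫ u, (1 - Real.exp (-((t * c) * |(n:ℝ) * u| ^ (-β)))) ∂U
  have hnn : ∀ t : ℝ, 0 ≤ t → ∀ v : ℝ, 0 ≤ 1 - Real.exp (-((t * c) * |v| ^ (-β))) := fun t ht v => by
    have := Real.exp_le_one_iff.2 (neg_nonpos.2 (show 0 ≤ (t * c) * |v| ^ (-β) by positivity)); linarith
  have hi1 : ∀ n : ℕ, ∀ t : ℝ, 0 ≤ t →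
      Integrable (fun u => Real.exp (-((t * c) * |(n:ℝ) * u| ^ (-β)))) U := by
    intro n t ht
    refine Integrable.mono' (integrable_const (1:ℝ))
      (Measurable.aestronglyMeasurable (by fun_prop)) (Eventually.of_forall fun u => ?_)
    rw [Real.norm_of_nonneg (Real.exp_pos _).le]
    linarith [hnn t ht (n * u)]
  have hlap : ∀ n, ∀ t : ℝ, 0 ≤ t →
      ∫ l, Real.exp (-(l * t)) ∂((Measure.pi fun _ : Fin n => U).map (X n)) = (1 + - g n t) ^ n := by
    intro n t ht
    rw [integral_map (hX n).aemeasurable (by fun_prop)]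
    have h1 : ∀ u : Fin n → ℝ, Real.exp (-(X n u * t)) =
        ∏ i, Real.exp (-((t * c) * |(n:ℝ) * u i| ^ (-β))) := by
      intro u
      rw [← Real.exp_sum]
      congr 1
      simp only [X]
      rw [Finset.sum_mul, ← Finset.sum_neg_distrib]
      exact Finset.sum_congr rfl fun i _ => by ring
    simp only [h1]
    rw [integral_fintype_prod_eq_prod (fun (_ : Fin n) (u : ℝ) => Real.exp (-((t * c) * |(n:ℝ) * u| ^ (-β))))]
    simp only [Finset.prod_const, Finset.card_univ, Fintype.card_fin, g]
    rw [integral_sub (integrable_const _) (hi1 n t ht)]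
    simp
  have hng : ∀ n : ℕ, ∀ t : ℝ, 0 < n → (n:ℝ) * g n t =
      ∫ v in (0:ℝ)..n, (1 - Real.exp (-((t * c) * |v| ^ (-β)))) := by
    intro n t hn
    have := intervalIntegral.mul_integral_comp_mul_left (a := 0) (b := 1) (c := (n:ℝ))
      (f := fun v : ℝ => 1 - Real.exp (-((t * c) * |v| ^ (-β))))
    simp only [mul_zero, mul_one] at this
    rw [← this, intervalIntegral.integral_of_le zero_le_one]
  have hint : ∀ t : ℝ, 0 ≤ t → IntegrableOn (fun v : ℝ => 1 - Real.exp (-((t * c) * |v| ^ (-β)))) (Ioi 0) :=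
    fun t ht => gd_integrable β (t * c) hβ (by positivity)
  refine gd_limit (1 / β) (by positivity) (fun n => (Measure.pi fun _ : Fin n => U).map (X n)) ?_ ?_ ?_ ?_
  · exact fun n => Measure.isProbabilityMeasure_map (hX n).aemeasurable
  · intro n
    rw [Measure.map_apply (hX n) measurableSet_Iio]
    have : X n ⁻¹' Iio 0 = ∅ := by
      ext u; simp [hXn n u]
    rw [this]; simp
  · intro n t ht
    rw [hlap n t ht]
    rcases Nat.eq_zero_or_pos n with rfl | hn
    · have : 0 ≤ t ^ (1 / β) := by positivity
      simp only [pow_zero]; linarith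
    have h1 : g n t ≤ 1 := by
      have h2 : g n t ≤ ∫ u, (1:ℝ) ∂U := by
        refine integral_mono ((integrable_const _).sub (hi1 n t ht)) (integrable_const _) ?_
        intro u
        have := Real.exp_pos (-((t * c) * |(n:ℝ) * u| ^ (-β)))
        simp only; linarith
      simpa using h2
    have h3 := one_add_mul_le_pow (show -2 ≤ - g n t by linarith) n
    have h4 : (n:ℝ) * g n t ≤ t ^ (1 / β) := by
      rw [hng n t hn, ← hG t ht, intervalIntegral.integral_of_le (by positivity)]
      exact setIntegral_mono_set (hint t ht) (Eventually.of_forall (hnn t ht))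
        (Eventually.of_forall Ioc_subset_Ioi_self)
    linarith
  · intro t ht
    have h1 : Tendsto (fun n : ℕ => (n:ℝ) * (- g n t)) atTop (𝓝 (-(t ^ (1 / β)))) := by
      have := (intervalIntegral_tendsto_integral_Ioi 0 (hint t ht) tendsto_natCast_atTop_atTop).neg
      rw [hG t ht] at this
      refine this.congr' ?_
      filter_upwards [eventually_gt_atTop 0] with n hn
      rw [← hng n t hn]; ring
    refine (Real.tendsto_one_add_pow_exp_of_tendsto h1).congr fun n => ?_
    exact (hlap n t ht).symm

theorem gaussian_decomposition_of_power_law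
    (q : ℝ) (hq₀ : 0 < q) (hq₂ : q ≤ 2) :
    ∃ μ : Measure ℝ, IsProbabilityMeasure μ ∧ μ {l : ℝ | l ≤ 0} = 0 ∧
      ∀ x : ℝ, Real.exp (-(|x| ^ q)) = ∫ l, Real.exp (-(l * x ^ 2)) ∂μ := by
  rcases hq₂.eq_or_lt with rfl | hq
  · refine ⟨Measure.dirac 1, inferInstance, ?_, fun x => ?_⟩
    · change Measure.dirac (1:ℝ) (Iic 0) = 0
      rw [Measure.dirac_apply' _ measurableSet_Iic]; simp
    · simp
  · obtain ⟨μ, h1, h2, h3⟩ := gd_stable (2 / q) (by rw [lt_div_iff₀ hq₀]; linarith)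
    refine ⟨μ, h1, h2, fun x => ?_⟩
    rw [← h3 (x ^ 2) (sq_nonneg x), ← sq_abs, ← Real.rpow_natCast, ← Real.rpow_mul (abs_nonneg x)]
    congr 3
    push_cast
    field_simp
end

section
/- There exists a constant C₀ ∈ (1,∞) such that for every inverse temperature β ∈ (0,∞) and every integer N ≥ 1, the variance of the height at the origin of the two-dimensional integer-valued Gaussian free field on the rectangle Λ_N at inverse temperature C₀β is bounded above by the variance of the height at the origin of the discrete Gaussian long-range chain of length N with range exponent 2 at inverse temperature β: Var^{2D-IVGFF}_{N,C₀β}[φ(0)] ≤ Var_{N,β,2}[φ(0)]. -/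
noncomputable section

/-- Configurations of the long-range chain of length `N`: integer-valued height functions
on `ℤ` vanishing outside `{-N, …, N}`. -/
def ChainConfig (N : ℕ) : Type :=
  {φ : ℤ → ℤ // ∀ k : ℤ, (N : ℤ) < |k| → φ k = 0}

/-- Energy `β ∑_{i ≠ j} |φ(i) − φ(j)|^q / |i − j|^α` of a configuration of the long-range
chain with potential exponent `q` and range exponent `α`. -/
def chainEnergy (β α q : ℝ) (φ : ℤ → ℤ) : ℝ :=
  β * ∑' p : ℤ × ℤ,
      if p.1 = p.2 then 0
      else |((φ p.1 - φ p.2 : ℤ) : ℝ)| ^ q / |((p.1 - p.2 : ℤ) : ℝ)| ^ α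

/-- Boltzmann weight of a configuration. -/
def chainWeight (β α q : ℝ) (φ : ℤ → ℤ) : ℝ :=
  Real.exp (-chainEnergy β α q φ)

/-- Partition function of the long-range chain. -/
def chainZ (N : ℕ) (β α q : ℝ) : ℝ :=
  ∑' φ : ChainConfig N, chainWeight β α q φ.val

/-- Mean of the height at the origin. -/
def chainMean (N : ℕ) (β α q : ℝ) : ℝ :=
  (∑' φ : ChainConfig N, ((φ.val 0 : ℤ) : ℝ) * chainWeight β α q φ.val) / chainZ N β α q

/-- Variance of the height at the origin under the long-range chain `μ_{N,β,α}`
(with potential exponent `q`; `q = 2` is the discrete Gaussian chain,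
`q ∈ (0,2)` the `q`-SOS chain). -/
def chainVar (N : ℕ) (β α q : ℝ) : ℝ :=
  (∑' φ : ChainConfig N, ((φ.val 0 : ℤ) : ℝ) ^ 2 * chainWeight β α q φ.val) / chainZ N β α q
    - chainMean N β α q ^ 2

end

noncomputable section

/-- The two-dimensional rectangle `Λ_N = {-N,…,N} × {-2N,…,2N} ⊆ ℤ²`. -/
def rect (N : ℕ) : Set (ℤ × ℤ) :=
  {v : ℤ × ℤ | |v.1| ≤ (N : ℤ) ∧ |v.2| ≤ 2 * (N : ℤ)}

/-- Configurations of the two-dimensional integer-valued Gaussian free field on `Λ_N`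
with Dirichlet boundary condition: integer-valued height functions on `ℤ²` vanishing
outside `Λ_N` (in particular on the external boundary `∂Λ_N`). -/
def Config2D (N : ℕ) : Type :=
  {φ : ℤ × ℤ → ℤ // ∀ v : ℤ × ℤ, v ∉ rect N → φ v = 0}

/-- Energy `β ∑_{x∼y} (φ(x)−φ(y))²` of a configuration, the sum running over
nearest-neighbour pairs (each unordered pair counted once, whence the factor `1/2`). -/
def energy2D (β : ℝ) (φ : ℤ × ℤ → ℤ) : ℝ :=
  β * ((1 : ℝ) / 2 *
    ∑' p : (ℤ × ℤ) × (ℤ × ℤ),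
      if |p.1.1 - p.2.1| + |p.1.2 - p.2.2| = 1 then ((φ p.1 - φ p.2 : ℤ) : ℝ) ^ 2 else 0)

/-- Boltzmann weight of a configuration of the 2D integer-valued Gaussian free field. -/
def weight2D (β : ℝ) (φ : ℤ × ℤ → ℤ) : ℝ := Real.exp (-energy2D β φ)

/-- Partition function of the 2D integer-valued Gaussian free field on `Λ_N`. -/
def Z2D (N : ℕ) (β : ℝ) : ℝ := ∑' φ : Config2D N, weight2D β φ.val

/-- Mean of the height at the origin of the 2D integer-valued Gaussian free field. -/
def mean2D (N : ℕ) (β : ℝ) : ℝ :=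
  (∑' φ : Config2D N, ((φ.val (0, 0) : ℤ) : ℝ) * weight2D β φ.val) / Z2D N β

/-- Variance of the height at the origin of the 2D integer-valued Gaussian free field
at inverse temperature `β` on the rectangle `Λ_N`. -/
def var2D (N : ℕ) (β : ℝ) : ℝ :=
  (∑' φ : Config2D N, ((φ.val (0, 0) : ℤ) : ℝ) ^ 2 * weight2D β φ.val) / Z2D N β
    - mean2D N β ^ 2

end


lemma sinh_pd {α : Type*} (s : Finset α) (F w : α → ℝ) :
    0 ≤ ∑ a ∈ s, ∑ b ∈ s, F a * F b * Real.sinh (w a * w b) := by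
  have h : HasSum (fun k : ℕ => ∑ a ∈ s, ∑ b ∈ s, F a * F b * ((w a * w b) ^ (2 * k + 1) / ((2 * k + 1).factorial : ℝ)))
      (∑ a ∈ s, ∑ b ∈ s, F a * F b * Real.sinh (w a * w b)) := by
    refine hasSum_sum fun a _ => hasSum_sum fun b _ => ?_
    exact (Real.hasSum_sinh _).mul_left _
  refine h.nonneg fun k => ?_
  have : ∑ a ∈ s, ∑ b ∈ s, F a * F b * ((w a * w b) ^ (2 * k + 1) / ((2 * k + 1).factorial : ℝ))
      = (∑ a ∈ s, F a * w a ^ (2 * k + 1)) ^ 2 / ((2 * k + 1).factorial : ℝ) := by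
    rw [sq, Finset.sum_mul_sum, Finset.sum_div]
    refine Finset.sum_congr rfl fun a _ => ?_
    rw [Finset.sum_div]
    refine Finset.sum_congr rfl fun b _ => ?_
    rw [mul_pow]; ring
  rw [this]; positivity

lemma tsum_pd {α : Type*} (F w : α → ℝ)
    (hs : Summable fun p : α × α => F p.1 * F p.2 * Real.sinh (w p.1 * w p.2)) :
    0 ≤ ∑' p : α × α, F p.1 * F p.2 * Real.sinh (w p.1 * w p.2) := by
  have h1 := hs.hasSum
  have h2 : Filter.Tendsto (fun s : Finset α => s ×ˢ s) Filter.atTop Filter.atTop := by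
    refine Filter.tendsto_atTop.2 fun t => ?_
    classical
    refine Filter.eventually_atTop.2 ⟨t.image Prod.fst ∪ t.image Prod.snd, fun s hs => ?_⟩
    intro p hp
    have := @hs
    rw [Finset.mem_product]
    constructor
    · exact hs (Finset.mem_union_left _ (Finset.mem_image_of_mem _ hp))
    · exact hs (Finset.mem_union_right _ (Finset.mem_image_of_mem _ hp))
  have h3 := h1.comp h2
  refine ge_of_tendsto' h3 fun s => ?_
  simp only [Function.comp, Finset.sum_product]
  exact sinh_pd s F w

/-- (c,a,b) -> (c+a+b, a-b). -/
def splitEquiv (ι : Type*) : ((ι → Fin 2) × ((ι → ℤ) × (ι → ℤ))) ≃ ((ι → ℤ) × (ι → ℤ)) where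
  toFun t := (fun i => ((t.1 i : ℕ) : ℤ) + t.2.1 i + t.2.2 i, fun i => t.2.1 i - t.2.2 i)
  invFun p := (fun i => ⟨((p.1 i + p.2 i) % 2).toNat, by omega⟩,
    (fun i => (p.1 i + p.2 i) / 2, fun i => (p.1 i + p.2 i) / 2 - p.2 i))
  left_inv := by
    rintro ⟨c, a, b⟩
    simp only [Prod.mk.injEq]
    refine ⟨?_, ?_, ?_⟩
    · funext i; apply Fin.ext; have := (c i).2; simp only; omega
    · funext i; have := (c i).2; omega
    · funext i; have := (c i).2; omega
  right_inv := by
    rintro ⟨x, y⟩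
    simp only [Prod.mk.injEq]
    refine ⟨?_, ?_⟩
    · funext i; omega
    · funext i; omega

lemma rank_one {ι : Type*} [Finite ι] (B : (ι → ℤ) → ℝ) (u v : (ι → ℤ) →+ ℝ)
    (hB : ∀ x y, B (x + y) + B (x - y) = 2 * (B x + B y))
    (hs0 : Summable fun x => Real.exp (-B x))
    (hs2 : Summable fun x => u x ^ 2 * Real.exp (-B x)) :
    (∑' x, u x ^ 2 * Real.exp (-(B x + v x ^ 2))) * (∑' x, Real.exp (-B x)) ≤
    (∑' x, u x ^ 2 * Real.exp (-B x)) * (∑' x, Real.exp (-(B x + v x ^ 2))) := by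
  have ht0 : Summable fun x => Real.exp (-(B x + v x ^ 2)) := by
    refine Summable.of_nonneg_of_le (fun x => by positivity) (fun x => ?_) hs0
    apply Real.exp_le_exp.2; nlinarith [sq_nonneg (v x)]
  have ht2 : Summable fun x => u x ^ 2 * Real.exp (-(B x + v x ^ 2)) := by
    refine Summable.of_nonneg_of_le (fun x => by positivity) (fun x => ?_) hs2
    gcongr
    nlinarith [sq_nonneg (v x)]
  have n0 : ∀ x, 0 ≤ Real.exp (-B x) := fun x => by positivity
  have n0' : ∀ x, 0 ≤ Real.exp (-(B x + v x ^ 2)) := fun x => by positivity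
  have n2 : ∀ x, 0 ≤ u x ^ 2 * Real.exp (-B x) := fun x => by positivity
  have n2' : ∀ x, 0 ≤ u x ^ 2 * Real.exp (-(B x + v x ^ 2)) := fun x => by positivity
  have p1 := Summable.mul_of_nonneg hs2 ht0 n2 n0'
  have p2 := Summable.mul_of_nonneg ht2 hs0 n2' n0
  have p1' := Summable.mul_of_nonneg ht0 hs2 n0' n2
  have p2' := Summable.mul_of_nonneg hs0 ht2 n0 n2'
  have e1 := hs2.tsum_mul_tsum ht0 p1
  have e2 := ht2.tsum_mul_tsum hs0 p2
  have e1' := ht0.tsum_mul_tsum hs2 p1'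
  have e2' := hs0.tsum_mul_tsum ht2 p2'
  have hS := ((p1.sub p2).add (p1'.sub p2'))
  have key : (∑' p : (ι → ℤ) × (ι → ℤ), _) = _ := 
    ((p1.sub p2).tsum_add (p1'.sub p2')).trans (congrArg₂ (· + ·) (p1.tsum_sub p2) (p1'.tsum_sub p2'))
  rw [← e1, ← e2, ← e1', ← e2'] at key
  have nn : 0 ≤ (∑' p : (ι → ℤ) × (ι → ℤ), ((u p.1 ^ 2 * Real.exp (-B p.1) * Real.exp (-(B p.2 + v p.2 ^ 2)) -
      u p.1 ^ 2 * Real.exp (-(B p.1 + v p.1 ^ 2)) * Real.exp (-B p.2)) + 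
      (Real.exp (-(B p.1 + v p.1 ^ 2)) * (u p.2 ^ 2 * Real.exp (-B p.2)) - 
        Real.exp (-B p.1) * (u p.2 ^ 2 * Real.exp (-(B p.2 + v p.2 ^ 2)))))) := by
    rw [← (splitEquiv ι).tsum_eq]
    have hS' := ((splitEquiv ι).summable_iff).2 hS
    have hcast : ∀ t : ((ι → Fin 2) × ((ι → ℤ) × (ι → ℤ))), 
      (fun p : (ι → ℤ) × (ι → ℤ) => ((u p.1 ^ 2 * Real.exp (-B p.1) * Real.exp (-(B p.2 + v p.2 ^ 2)) -
      u p.1 ^ 2 * Real.exp (-(B p.1 + v p.1 ^ 2)) * Real.exp (-B p.2)) + 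
      (Real.exp (-(B p.1 + v p.1 ^ 2)) * (u p.2 ^ 2 * Real.exp (-B p.2)) - 
        Real.exp (-B p.1) * (u p.2 ^ 2 * Real.exp (-(B p.2 + v p.2 ^ 2)))))) (splitEquiv ι t) = 
      (fun (c : ι → Fin 2) (q : (ι → ℤ) × (ι → ℤ)) => 
        (fun a : ι → ℤ => Real.sqrt 2 * u (fun i => ((c i : ℕ) : ℤ) + 2 * a i) * 
          Real.exp (-(B (fun i => ((c i : ℕ) : ℤ) + 2 * a i)) / 2 - v (fun i => ((c i : ℕ) : ℤ) + 2 * a i) ^ 2 / 4)) q.1 *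
        (fun a : ι → ℤ => Real.sqrt 2 * u (fun i => ((c i : ℕ) : ℤ) + 2 * a i) * 
          Real.exp (-(B (fun i => ((c i : ℕ) : ℤ) + 2 * a i)) / 2 - v (fun i => ((c i : ℕ) : ℤ) + 2 * a i) ^ 2 / 4)) q.2 *
        Real.sinh ((fun a : ι → ℤ => v (fun i => ((c i : ℕ) : ℤ) + 2 * a i) / Real.sqrt 2) q.1 *
          (fun a : ι → ℤ => v (fun i => ((c i : ℕ) : ℤ) + 2 * a i) / Real.sqrt 2) q.2)) t.1 t.2 := by
      intro t
      set x := (splitEquiv ι t).1 with hx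
      set y := (splitEquiv ι t).2 with hy
      have hp : (fun i => ((t.1 i : ℕ) : ℤ) + 2 * t.2.1 i) = x + y := by
        funext i; simp [hx, hy, splitEquiv]; ring
      have hq : (fun i => ((t.1 i : ℕ) : ℤ) + 2 * t.2.2 i) = x - y := by
        funext i; simp [hx, hy, splitEquiv]; ring
      simp only [← hx, ← hy]
      rw [hp, hq, map_add, map_sub, map_add, map_sub]
      have h2 : Real.sqrt 2 * Real.sqrt 2 = 2 := Real.mul_self_sqrt (by norm_num)
      have hss : (v x + v y) / Real.sqrt 2 * ((v x - v y) / Real.sqrt 2) = (v x ^ 2 - v y ^ 2) / 2 := by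
        rw [div_mul_div_comm, h2]; ring
      rw [hss, Real.sinh_eq]
      have hb := hB x y
      have E1 : Real.exp (-(B (x + y)) / 2 - (v x + v y) ^ 2 / 4) * Real.exp (-(B (x - y)) / 2 - (v x - v y) ^ 2 / 4)
         * Real.exp ((v x ^ 2 - v y ^ 2) / 2) = Real.exp (-B x) * Real.exp (-(B y + v y ^ 2)) := by
        rw [← Real.exp_add, ← Real.exp_add, ← Real.exp_add]; congr 1; linarith
      have E2 : Real.exp (-(B (x + y)) / 2 - (v x + v y) ^ 2 / 4) * Real.exp (-(B (x - y)) / 2 - (v x - v y) ^ 2 / 4)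
         * Real.exp (-((v x ^ 2 - v y ^ 2) / 2)) = Real.exp (-(B x + v x ^ 2)) * Real.exp (-B y) := by
        rw [← Real.exp_add, ← Real.exp_add, ← Real.exp_add]; congr 1; linarith
      generalize Real.exp (-(B (x + y)) / 2 - (v x + v y) ^ 2 / 4) = P at *
      generalize Real.exp (-(B (x - y)) / 2 - (v x - v y) ^ 2 / 4) = Q at *
      generalize Real.exp ((v x ^ 2 - v y ^ 2) / 2) = S1 at *
      generalize Real.exp (-((v x ^ 2 - v y ^ 2) / 2)) = S2 at *
      have : Real.sqrt 2 * (u x + u y) * P * (Real.sqrt 2 * (u x - u y) * Q) * ((S1 - S2) / 2)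
        = (Real.sqrt 2 * Real.sqrt 2) * (u x ^ 2 - u y ^ 2) * (P * Q * S1 - P * Q * S2) / 2 := by ring
      rw [this, h2, E1, E2]; ring
    have hfun := funext hcast
    change Summable (fun t => _) at hS'
    simp only [Function.comp_def] at hS'
    rw [hfun] at hS'
    rw [hfun, hS'.tsum_prod]
    refine tsum_nonneg fun c => ?_
    exact tsum_pd (fun a : ι → ℤ => Real.sqrt 2 * u (fun i => ((c i : ℕ) : ℤ) + 2 * a i) * 
          Real.exp (-(B (fun i => ((c i : ℕ) : ℤ) + 2 * a i)) / 2 - v (fun i => ((c i : ℕ) : ℤ) + 2 * a i) ^ 2 / 4)) (fun a : ι → ℤ => v (fun i => ((c i : ℕ) : ℤ) + 2 * a i) / Real.sqrt 2) (hS'.prod_factor c)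
  rw [key] at nn
  nlinarith [nn]

lemma multi_rank {ι κ : Type*} [Finite ι] (B : (ι → ℤ) → ℝ) (u : (ι → ℤ) →+ ℝ) (v : κ → (ι → ℤ) →+ ℝ)
    (hB : ∀ x y, B (x + y) + B (x - y) = 2 * (B x + B y))
    (hs0 : Summable fun x => Real.exp (-B x))
    (hs2 : Summable fun x => u x ^ 2 * Real.exp (-B x)) (s : Finset κ) :
    (∑' x, u x ^ 2 * Real.exp (-(B x + ∑ k ∈ s, v k x ^ 2))) / (∑' x, Real.exp (-(B x + ∑ k ∈ s, v k x ^ 2))) ≤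
    (∑' x, u x ^ 2 * Real.exp (-B x)) / (∑' x, Real.exp (-B x)) := by
  classical
  induction s using Finset.induction_on with
  | empty => simp
  | insert k s hk ih =>
    refine le_trans ?_ ih
    have hB' : ∀ x y, (B (x + y) + ∑ k ∈ s, v k (x + y) ^ 2) + (B (x - y) + ∑ k ∈ s, v k (x - y) ^ 2) = 
       2 * ((B x + ∑ k ∈ s, v k x ^ 2) + (B y + ∑ k ∈ s, v k y ^ 2)) := by
      intro x y
      have : ∑ k ∈ s, v k (x + y) ^ 2 + ∑ k ∈ s, v k (x - y) ^ 2 = 2 * (∑ k ∈ s, v k x ^ 2 + ∑ k ∈ s, v k y ^ 2) := by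
        rw [← Finset.sum_add_distrib, ← Finset.sum_add_distrib, Finset.mul_sum]
        refine Finset.sum_congr rfl fun k _ => ?_
        rw [map_add, map_sub]; ring
      linarith [hB x y]
    have hn : ∀ x, 0 ≤ ∑ k ∈ s, v k x ^ 2 := fun x => Finset.sum_nonneg fun k _ => sq_nonneg _
    have hs0' : Summable fun x => Real.exp (-(B x + ∑ k ∈ s, v k x ^ 2)) := by
      refine Summable.of_nonneg_of_le (fun x => by positivity) (fun x => ?_) hs0
      apply Real.exp_le_exp.2; linarith [hn x]
    have hs2' : Summable fun x => u x ^ 2 * Real.exp (-(B x + ∑ k ∈ s, v k x ^ 2)) := by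
      refine Summable.of_nonneg_of_le (fun x => by positivity) (fun x => ?_) hs2
      gcongr
      linarith [hn x]
    have hs0'' : Summable fun x => Real.exp (-((B x + ∑ k ∈ s, v k x ^ 2) + v k x ^ 2)) := by
      refine Summable.of_nonneg_of_le (fun x => by positivity) (fun x => ?_) hs0'
      apply Real.exp_le_exp.2; linarith [sq_nonneg (v k x)]
    have := rank_one _ u (v k) hB' hs0' hs2'
    have hr : ∀ x, B x + ∑ k ∈ insert k s, v k x ^ 2 = (B x + ∑ k ∈ s, v k x ^ 2) + v k x ^ 2 := by
      intro x; rw [Finset.sum_insert hk]; ring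
    simp only [hr]
    rw [div_le_div_iff₀]
    · exact this
    · exact hs0''.tsum_pos (fun x => by positivity) 0 (by positivity)
    · exact hs0'.tsum_pos (fun x => by positivity) 0 (by positivity)

lemma summable_int_gauss (ε : ℝ) (h : 0 < ε) : Summable fun n : ℤ => Real.exp (-(ε * (n:ℝ)^2)) := by
  have hnat : Summable fun n : ℕ => Real.exp (-(ε * (n:ℝ)^2)) := by
    have h1 : Summable fun n : ℕ => Real.exp (-ε) ^ n :=
      summable_geometric_of_lt_one (by positivity) (by rw [Real.exp_lt_one_iff]; linarith)
    refine Summable.of_nonneg_of_le (fun x => by positivity) (fun n => ?_) h1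
    rw [← Real.exp_nat_mul]
    apply Real.exp_le_exp.2
    have : (n:ℝ) ≤ (n:ℝ)^2 := by exact_mod_cast Nat.le_self_pow (by norm_num) n
    nlinarith
  apply Summable.of_nat_of_neg
  · simpa using hnat
  · simpa using hnat

lemma summable_pi_prod {ι : Type*} [Finite ι] (f : ℤ → ℝ) (hf : ∀ n, 0 ≤ f n) (hs : Summable f) :
    ∀ [Fintype ι], Summable fun x : ι → ℤ => ∏ i, f (x i) := by
  induction ι using Finite.induction_empty_option with
  | of_equiv e ih =>
    rename_i α β
    intro _
    have : Fintype α := Fintype.ofEquiv β e.symm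
    have := ih
    rw [← (Equiv.arrowCongr e (Equiv.refl ℤ)).summable_iff]
    refine this.congr fun x => ?_
    simp only [Function.comp, Equiv.arrowCongr_apply]
    exact (Equiv.prod_comp e.symm (fun i => f (x i))).symm
  | h_empty => 
    intro _
    exact Summable.of_finite
  | h_option ih =>
    rename_i α _
    intro inst
    have hi : inst = instFintypeOption := Subsingleton.elim _ _
    subst hi
    have h1 := hs.mul_of_nonneg ih hf (fun x => Finset.prod_nonneg fun i _ => hf _)
    rw [← (Equiv.piOptionEquivProd (β := fun _ : Option α => ℤ)).symm.summable_iff]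
    refine h1.congr fun x => ?_
    simp [Fintype.prod_option, Equiv.piOptionEquivProd]

lemma summable_gauss {ι : Type*} [Fintype ι] (ε : ℝ) (h : 0 < ε) :
    Summable fun x : ι → ℤ => Real.exp (-(ε * ∑ i, (x i : ℝ)^2)) := by
  have := summable_pi_prod (ι := ι) _ (fun n => (Real.exp_pos _).le) (summable_int_gauss ε h)
  refine this.congr fun x => ?_
  rw [← Real.exp_sum, Finset.mul_sum, Finset.sum_neg_distrib]

lemma summable_gauss2 {ι : Type*} [Fintype ι] (ε : ℝ) (h : 0 < ε) (o : ι) :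
    Summable fun x : ι → ℤ => (x o : ℝ)^2 * Real.exp (-(ε * ∑ i, (x i : ℝ)^2)) := by
  have := (summable_gauss (ι := ι) (ε/2) (by positivity)).mul_left (2/ε)
  refine Summable.of_nonneg_of_le (fun x => by positivity) (fun x => ?_) this
  have h1 : (x o : ℝ)^2 ≤ ∑ i, (x i : ℝ)^2 :=
    Finset.single_le_sum (f := fun i => (x i : ℝ)^2) (fun i _ => sq_nonneg _) (Finset.mem_univ o)
  set S := ∑ i, (x i : ℝ)^2
  have h2 : ε / 2 * S ≤ Real.exp (ε / 2 * S) := by linarith [Real.add_one_le_exp (ε / 2 * S)]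
  have h3 : Real.exp (-(ε * S)) = Real.exp (-(ε/2*S)) * Real.exp (-(ε/2*S)) := by
    rw [← Real.exp_add]; congr 1; ring
  have h4 : Real.exp (ε / 2 * S) * Real.exp (-(ε/2*S)) = 1 := by rw [← Real.exp_add]; simp
  have h5 : S * Real.exp (-(ε/2*S)) ≤ 2 / ε := by
    rw [le_div_iff₀ h]
    have := mul_le_mul_of_nonneg_right h2 (Real.exp_pos (-(ε/2*S))).le
    rw [h4] at this
    nlinarith
  rw [h3, ← mul_assoc]
  refine mul_le_mul_of_nonneg_right (le_trans ?_ h5) (Real.exp_pos _).le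
  exact mul_le_mul_of_nonneg_right h1 (Real.exp_pos _).le

/-- casting an integer vector -/
def icast {ι : Type*} (x : ι → ℤ) : ι → ℝ := fun i => (x i : ℝ)

lemma summable_form {ι : Type*} [Fintype ι] (q : (ι → ℝ) → ℝ) (ε : ℝ) (h : 0 < ε)
    (hc : ∀ f, ε * ∑ i, f i ^ 2 ≤ q f) : Summable fun x : ι → ℤ => Real.exp (-q (icast x)) := by
  refine Summable.of_nonneg_of_le (fun x => by positivity) (fun x => ?_) (summable_gauss ε h)
  apply Real.exp_le_exp.2
  have := hc (icast x)
  simp only [icast] at this ⊢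
  linarith

lemma summable_form2 {ι : Type*} [Fintype ι] (q : (ι → ℝ) → ℝ) (ε : ℝ) (h : 0 < ε)
    (hc : ∀ f, ε * ∑ i, f i ^ 2 ≤ q f) (o : ι) :
    Summable fun x : ι → ℤ => (x o : ℝ)^2 * Real.exp (-q (icast x)) := by
  refine Summable.of_nonneg_of_le (fun x => by positivity) (fun x => ?_) (summable_gauss2 ε h o)
  have := hc (icast x)
  simp only [icast] at this ⊢
  gcongr

theorem mono_form {ι : Type*} [Fintype ι] (q1 q2 : QuadraticForm ℝ (ι → ℝ)) (ε : ℝ) (h : 0 < ε)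
    (hc : ∀ f, ε * ∑ i, f i ^ 2 ≤ q1 f) (hle : ∀ f, q1 f ≤ q2 f) (o : ι) :
    (∑' x : ι → ℤ, (x o : ℝ)^2 * Real.exp (-q2 (icast x))) / (∑' x : ι → ℤ, Real.exp (-q2 (icast x))) ≤
    (∑' x : ι → ℤ, (x o : ℝ)^2 * Real.exp (-q1 (icast x))) / (∑' x : ι → ℤ, Real.exp (-q1 (icast x))) := by
  classical
  obtain ⟨w, ⟨e⟩⟩ := QuadraticForm.equivalent_weightedSumSquares (q2 - q1)
  have he : ∀ f, ∑ i, w i * (e f i * e f i) = q2 f - q1 f := by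
    intro f
    have := e.map_app f
    rw [QuadraticMap.weightedSumSquares_apply] at this
    simpa using this
  have hw : ∀ i, 0 ≤ w i := by
    intro i
    have := he (e.symm (Pi.single i 1))
    have h2 := hle (e.symm (Pi.single i 1))
    rw [QuadraticMap.IsometryEquiv.apply_symm_apply] at this
    rw [Finset.sum_eq_single i] at this
    · simp at this; linarith
    · intro j _ hj; simp [hj]
    · simp
  let L : (ι → ℤ) →+ (ι → ℝ) := 
    { toFun := icast
      map_zero' := by funext i; simp [icast]
      map_add' := fun x y => by funext i; simp [icast] }
  let u : (ι → ℤ) →+ ℝ := (Pi.evalAddMonoidHom (fun _ : ι => ℝ) o).comp L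
  let v : Fin (Module.finrank ℝ (ι → ℝ)) → (ι → ℤ) →+ ℝ := fun k => 
    { toFun := fun x => Real.sqrt (w k) * e (icast x) k
      map_zero' := by
        have : icast (0 : ι → ℤ) = 0 := by funext i; simp [icast]
        rw [this]
        have : e 0 = 0 := map_zero e.toLinearEquiv
        rw [this]; simp
      map_add' := fun x y => by 
        have : icast (x + y) = icast x + icast y := by funext i; simp [icast]
        rw [this]
        have : e (icast x + icast y) = e (icast x) + e (icast y) := map_add e.toLinearEquiv _ _
        rw [this]; simp; ring }
  have key := multi_rank (fun x => q1 (icast x)) u v ?_ (summable_form q1 ε h hc) (summable_form2 q1 ε h hc o) Finset.univ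
  · have h2 : ∀ x : ι → ℤ, q1 (icast x) + ∑ k, v k x ^ 2 = q2 (icast x) := by
      intro x
      have : ∑ k, v k x ^ 2 = ∑ i, w i * (e (icast x) i * e (icast x) i) := by
        refine Finset.sum_congr rfl fun k _ => ?_
        change (Real.sqrt (w k) * e (icast x) k) ^ 2 = _
        rw [mul_pow, Real.sq_sqrt (hw k)]; ring
      rw [this, he]; ring
    simp only [h2] at key
    exact key
  · intro x y
    have h1 : icast (x + y) = icast x + icast y := by funext i; simp [icast]
    have h2 : icast (x - y) = icast x + (-1 : ℝ) • icast y := by funext i; simp [icast]; ring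
    simp only [h1, h2]
    rw [QuadraticMap.map_add q1, QuadraticMap.map_add q1, QuadraticMap.polar_smul_right, QuadraticMap.map_smul]
    simp; ring

/-- The quadratic form given by an infinite sum of squares. -/
lemma exists_form {V P : Type*} [AddCommGroup V] [Module ℝ V] (l : P → V →ₗ[ℝ] ℝ)
    (hs : ∀ f, Summable fun p => l p f ^ 2) :
    ∃ q : QuadraticForm ℝ V, ∀ f, q f = ∑' p, l p f ^ 2 := by
  have hs2 : ∀ f g, Summable fun p => l p f * l p g := by
    intro f g
    have := ((hs (f + g)).sub (hs f)).sub (hs g)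
    refine (this.mul_left (1/2)).congr fun p => ?_
    simp only [map_add]; ring
  refine ⟨LinearMap.BilinMap.toQuadraticMap (LinearMap.mk₂ ℝ (fun f g => ∑' p, l p f * l p g) ?_ ?_ ?_ ?_), ?_⟩
  · intro f g k
    rw [← (hs2 f k).tsum_add (hs2 g k)]
    simp [add_mul]
  · intro c f k
    rw [smul_eq_mul, ← tsum_mul_left]
    simp [mul_assoc]
  · intro f g k
    rw [← (hs2 f g).tsum_add (hs2 f k)]
    simp [mul_add]
  · intro c f k
    rw [smul_eq_mul, ← tsum_mul_left]
    refine tsum_congr fun p => ?_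
    simp; ring
  · intro f
    simp [sq]

lemma hardy_fin (a : ℕ → ℝ) (M : ℕ) :
    ∑ n ∈ Finset.range M, ((∑ k ∈ Finset.range (n+1), a k) / ((n:ℝ)+1)) ^ 2
      + 2 * M * ((∑ k ∈ Finset.range M, a k) / (M:ℝ)) ^ 2 ≤ 4 * ∑ k ∈ Finset.range M, a k ^ 2 := by
  induction M with
  | zero => simp
  | succ M ih =>
    rw [Finset.sum_range_succ, Finset.sum_range_succ (fun k => a k ^ 2)]
    have hA : (M:ℝ) * ((∑ k ∈ Finset.range M, a k) / (M:ℝ)) = ∑ k ∈ Finset.range M, a k := by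
      rcases Nat.eq_zero_or_pos M with h | h
      · subst h; simp
      · field_simp
    have hA' : ((M:ℝ) + 1) * ((∑ k ∈ Finset.range M, a k + a M) / ((M:ℝ)+1)) =
        (M:ℝ) * ((∑ k ∈ Finset.range M, a k) / (M:ℝ)) + a M := by
      rw [hA]; field_simp
    push_cast
    rw [Finset.sum_range_succ a M] 
    generalize (∑ k ∈ Finset.range M, a k) / (M:ℝ) = A at *
    generalize (∑ k ∈ Finset.range M, a k + a M) / ((M:ℝ)+1) = A' at *
    have ha : a M = ((M:ℝ) + 1) * A' - M * A := by linarith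
    have hM : (0:ℝ) ≤ M := Nat.cast_nonneg M
    have h1 : 0 ≤ (A' - 2 * a M) ^ 2 + 2 * M * (A - A') ^ 2 := by positivity
    have h2 : (A' - 2 * a M) ^ 2 + 2 * M * (A - A') ^ 2 = 4 * a M ^ 2 + 2 * M * A ^ 2 - (2 * M + 3) * A' ^ 2 := by
      rw [ha]; ring
    nlinarith

open ENNReal in
lemma hardy (g : ℕ → ℝ) : 
    ∑' n : ℕ, ENNReal.ofReal ((g (n+1) - g 0) ^ 2 / ((n:ℝ)+1) ^ 2) ≤ 
      4 * ∑' k : ℕ, ENNReal.ofReal ((g (k+1) - g k) ^ 2) := by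
  refine ENNReal.tsum_le_of_sum_range_le fun M => ?_
  have h := hardy_fin (fun k => g (k+1) - g k) M
  have h1 : ∑ n ∈ Finset.range M, (g (n+1) - g 0) ^ 2 / ((n:ℝ)+1) ^ 2 ≤ 
      4 * ∑ k ∈ Finset.range M, (g (k+1) - g k) ^ 2 := by
    refine le_trans ?_ h
    simp only [Finset.sum_range_sub, div_pow]
    have : 0 ≤ 2 * (M:ℝ) * ((g M - g 0) ^ 2 / (M:ℝ) ^ 2) := by positivity
    linarith
  rw [← ENNReal.ofReal_sum_of_nonneg (fun n _ => by positivity)]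
  refine (ENNReal.ofReal_le_ofReal h1).trans ?_
  rw [ENNReal.ofReal_mul (by norm_num), ENNReal.ofReal_sum_of_nonneg (fun n _ => by positivity)]
  have : ENNReal.ofReal 4 = 4 := by norm_num
  rw [this]
  gcongr
  exact ENNReal.sum_le_tsum _

lemma tsum_shift (F : ℤ → ENNReal) (m : ℤ) : ∑' i : ℤ, F (i + m) = ∑' i, F i :=
  (Equiv.addRight m).tsum_eq F

lemma horiz (h : ℤ → ℝ) (n : ℕ) : 
    ∑' i : ℤ, ENNReal.ofReal ((h (i + (n + 1 : ℕ)) - h i) ^ 2 / ((n:ℝ)+1) ^ 2) ≤ 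
      ∑' i : ℤ, ENNReal.ofReal ((h (i + 1) - h i) ^ 2) := by
  have h1 : ∀ i : ℤ, ENNReal.ofReal ((h (i + (n + 1 : ℕ)) - h i) ^ 2 / ((n:ℝ)+1) ^ 2) ≤ 
      ∑ m ∈ Finset.range (n+1), ENNReal.ofReal ((h (i + m + 1) - h (i + m)) ^ 2 / ((n:ℝ)+1)) := by
    intro i
    rw [← ENNReal.ofReal_sum_of_nonneg (fun n _ => by positivity)]
    apply ENNReal.ofReal_le_ofReal
    have ht : h (i + (n + 1 : ℕ)) - h i = ∑ m ∈ Finset.range (n+1), (h (i + m + 1) - h (i + m)) := by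
      have := Finset.sum_range_sub (fun m : ℕ => h (i + m)) (n+1)
      simp only [Nat.cast_zero, add_zero] at this
      rw [← this]
      refine Finset.sum_congr rfl fun m _ => ?_
      push_cast; rw [add_assoc]
    rw [ht, ← Finset.sum_div]
    have hc := sq_sum_le_card_mul_sum_sq (s := Finset.range (n+1)) (f := fun m : ℕ => (h (i + m + 1) - h (i + m)))
    rw [Finset.card_range] at hc
    push_cast at hc
    rw [div_le_div_iff₀ (by positivity) (by positivity)]
    nlinarith [show (0:ℝ) < (n:ℝ)+1 by positivity]
  refine (ENNReal.tsum_le_tsum h1).trans ?_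
  rw [Summable.tsum_finsetSum (fun _ _ => ENNReal.summable)]
  have h2 : ∀ m ∈ Finset.range (n+1), ∑' i : ℤ, ENNReal.ofReal ((h (i + m + 1) - h (i + m)) ^ 2 / ((n:ℝ)+1)) = 
      ∑' i : ℤ, ENNReal.ofReal ((h (i + 1) - h i) ^ 2 / ((n:ℝ)+1)) := fun m _ => 
    tsum_shift (fun i => ENNReal.ofReal ((h (i + 1) - h i) ^ 2 / ((n:ℝ)+1))) m
  rw [Finset.sum_congr rfl h2, Finset.sum_const, Finset.card_range, nsmul_eq_mul, ← ENNReal.tsum_mul_left]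
  refine ENNReal.tsum_le_tsum fun i => ?_
  rw [← ENNReal.ofReal_natCast, ← ENNReal.ofReal_mul (by positivity)]
  apply ENNReal.ofReal_le_ofReal
  push_cast
  rw [mul_div_cancel₀]
  positivity

lemma trace_dist (f : ℤ × ℤ → ℝ) :
    ∑' n : ℕ, ∑' i : ℤ, ENNReal.ofReal ((f (i + (n + 1 : ℕ), 0) - f (i, 0)) ^ 2 / ((n:ℝ)+1) ^ 2) ≤
    24 * (∑' v : ℤ × ℤ, ENNReal.ofReal ((f (v.1 + 1, v.2) - f v) ^ 2) + 
      ∑' v : ℤ × ℤ, ENNReal.ofReal ((f (v.1, v.2 + 1) - f v) ^ 2)) := by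
  have h1 : ∀ n : ℕ, ∑' i : ℤ, ENNReal.ofReal ((f (i + (n + 1 : ℕ), 0) - f (i, 0)) ^ 2 / ((n:ℝ)+1) ^ 2) ≤
     6 * ∑' i : ℤ, ENNReal.ofReal ((f (i, ((n + 1 : ℕ) : ℤ)) - f (i, 0)) ^ 2 / ((n:ℝ)+1) ^ 2) + 
     3 * ∑' i : ℤ, ENNReal.ofReal ((f (i + 1, ((n + 1 : ℕ) : ℤ)) - f (i, ((n + 1 : ℕ) : ℤ))) ^ 2) := by
    intro n
    have hp : ∀ i : ℤ, ENNReal.ofReal ((f (i + (n + 1 : ℕ), 0) - f (i, 0)) ^ 2 / ((n:ℝ)+1) ^ 2) ≤ 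
      3 * ENNReal.ofReal ((f (i, ((n + 1 : ℕ) : ℤ)) - f (i, 0)) ^ 2 / ((n:ℝ)+1) ^ 2) + 
      3 * ENNReal.ofReal ((f (i + (n + 1 : ℕ), ((n + 1 : ℕ) : ℤ)) - f (i + (n + 1 : ℕ), 0)) ^ 2 / ((n:ℝ)+1) ^ 2) +
      3 * ENNReal.ofReal ((f (i + (n + 1 : ℕ), ((n + 1 : ℕ) : ℤ)) - f (i, ((n + 1 : ℕ) : ℤ))) ^ 2 / ((n:ℝ)+1) ^ 2) := by
      intro i
      have h3 : (3 : ENNReal) = ENNReal.ofReal 3 := by norm_num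
      rw [h3, ← ENNReal.ofReal_mul (by norm_num), ← ENNReal.ofReal_mul (by norm_num), ← ENNReal.ofReal_mul (by norm_num),
        ← ENNReal.ofReal_add (by positivity) (by positivity), ← ENNReal.ofReal_add (by positivity) (by positivity)]
      apply ENNReal.ofReal_le_ofReal
      rw [← mul_div_assoc, ← mul_div_assoc, ← mul_div_assoc, ← add_div, ← add_div]
      gcongr
      generalize f (i + (n + 1 : ℕ), 0) = a
      generalize f (i, 0) = b
      generalize f (i, ((n + 1 : ℕ) : ℤ)) = c
      generalize f (i + (n + 1 : ℕ), ((n + 1 : ℕ) : ℤ)) = d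
      nlinarith [sq_nonneg ((c - b) + (d - a)), sq_nonneg ((c - b) - (d - c)), sq_nonneg ((d - a) + (d - c))]
    refine (ENNReal.tsum_le_tsum hp).trans ?_
    rw [ENNReal.tsum_add, ENNReal.tsum_add, ENNReal.tsum_mul_left, ENNReal.tsum_mul_left, ENNReal.tsum_mul_left]
    rw [tsum_shift (fun i => ENNReal.ofReal ((f (i, ((n + 1 : ℕ) : ℤ)) - f (i, 0)) ^ 2 / ((n:ℝ)+1) ^ 2)), ← add_mul]
    have := horiz (fun i => f (i, ((n + 1 : ℕ) : ℤ))) n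
    norm_num only
    gcongr
  refine (ENNReal.tsum_le_tsum h1).trans ?_
  rw [ENNReal.tsum_add, ENNReal.tsum_mul_left, ENNReal.tsum_mul_left]
  have hV : ∑' n : ℕ, ∑' i : ℤ, ENNReal.ofReal ((f (i, ((n + 1 : ℕ) : ℤ)) - f (i, 0)) ^ 2 / ((n:ℝ)+1) ^ 2) ≤ 
     4 * ∑' v : ℤ × ℤ, ENNReal.ofReal ((f (v.1, v.2 + 1) - f v) ^ 2) := by
    rw [ENNReal.tsum_comm, ENNReal.tsum_prod', ← ENNReal.tsum_mul_left]
    refine ENNReal.tsum_le_tsum fun i => ?_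
    have := hardy (fun n : ℕ => f (i, (n : ℤ)))
    refine (le_trans (le_of_eq ?_) this).trans ?_
    · simp
    · gcongr
      have := ENNReal.tsum_comp_le_tsum_of_injective (f := fun n : ℕ => (n : ℤ)) Nat.cast_injective
        (fun j : ℤ => ENNReal.ofReal ((f (i, j + 1) - f (i, j)) ^ 2))
      simpa using this
  have hH : ∑' n : ℕ, ∑' i : ℤ, ENNReal.ofReal ((f (i + 1, ((n + 1 : ℕ) : ℤ)) - f (i, ((n + 1 : ℕ) : ℤ))) ^ 2) ≤ 
     ∑' v : ℤ × ℤ, ENNReal.ofReal ((f (v.1 + 1, v.2) - f v) ^ 2) := by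
    rw [ENNReal.tsum_prod', ENNReal.tsum_comm (α := ℤ) (β := ℤ)]
    exact ENNReal.tsum_comp_le_tsum_of_injective (f := fun n : ℕ => ((n + 1 : ℕ) : ℤ)) 
      (fun a b h => by simpa using h)
        (fun j : ℤ => ∑' i : ℤ, ENNReal.ofReal ((f (i + 1, j) - f (i, j)) ^ 2))
  calc _ ≤ 6 * (4 * ∑' v : ℤ × ℤ, ENNReal.ofReal ((f (v.1, v.2 + 1) - f v) ^ 2)) + 
        24 * ∑' v : ℤ × ℤ, ENNReal.ofReal ((f (v.1 + 1, v.2) - f v) ^ 2) := by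
        gcongr
        norm_num
     _ = _ := by
        rw [← mul_assoc, mul_add, add_comm]
        norm_num

lemma trace_ennreal (f : ℤ × ℤ → ℝ) :
    ∑' p : ℤ × ℤ, ENNReal.ofReal (((f (p.1, 0) - f (p.2, 0)) / |((p.1 - p.2 : ℤ) : ℝ)|) ^ 2) ≤
    48 * (∑' v : ℤ × ℤ, ENNReal.ofReal ((f (v.1 + 1, v.2) - f v) ^ 2) + 
      ∑' v : ℤ × ℤ, ENNReal.ofReal ((f (v.1, v.2 + 1) - f v) ^ 2)) := by
  have h := trace_dist f
  have h1 : ∑' p : ℤ × ℤ, ENNReal.ofReal (((f (p.1, 0) - f (p.2, 0)) / |((p.1 - p.2 : ℤ) : ℝ)|) ^ 2)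
    = ∑' m : ℤ, ∑' i : ℤ, ENNReal.ofReal (((f (i, 0) - f (i + m, 0)) / |((m : ℤ) : ℝ)|) ^ 2) := by
    rw [ENNReal.tsum_prod', ENNReal.tsum_comm (α := ℤ) (β := ℤ) (f := fun m i => ENNReal.ofReal (((f (i, 0) - f (i + m, 0)) / |((m : ℤ) : ℝ)|) ^ 2))]
    refine tsum_congr fun i => ?_
    rw [← (Equiv.addLeft i).tsum_eq]
    refine tsum_congr fun m => ?_
    simp
  rw [h1, tsum_of_add_one_of_neg_add_one ENNReal.summable ENNReal.summable]
  have h2 : ∀ n : ℕ, ∑' i : ℤ, ENNReal.ofReal (((f (i, 0) - f (i + ((n:ℤ) + 1), 0)) / |(((n:ℤ) + 1 : ℤ) : ℝ)|) ^ 2) = 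
     ∑' i : ℤ, ENNReal.ofReal ((f (i + (n + 1 : ℕ), 0) - f (i, 0)) ^ 2 / ((n:ℝ)+1) ^ 2) := by
    intro n
    refine tsum_congr fun i => ?_
    congr 1
    rw [div_pow, sq_abs]
    push_cast
    congr 1
    ring
  have h3 : ∀ n : ℕ, ∑' i : ℤ, ENNReal.ofReal (((f (i, 0) - f (i + (-((n:ℤ) + 1)), 0)) / |((-((n:ℤ) + 1) : ℤ) : ℝ)|) ^ 2) = 
     ∑' i : ℤ, ENNReal.ofReal ((f (i + (n + 1 : ℕ), 0) - f (i, 0)) ^ 2 / ((n:ℝ)+1) ^ 2) := by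
    intro n
    rw [← tsum_shift _ ((n:ℤ)+1)]
    refine tsum_congr fun i => ?_
    congr 1
    rw [div_pow, sq_abs]
    push_cast
    congr 1
    · rw [add_neg_cancel_right]
    · ring
  rw [tsum_congr h2, tsum_congr h3]
  have h0 : ∑' i : ℤ, ENNReal.ofReal (((f (i, 0) - f (i + 0, 0)) / |((0 : ℤ) : ℝ)|) ^ 2) = 0 := by simp
  have e48 : (48 : ENNReal) = 24 + 24 := by norm_num
  rw [h0, e48, add_mul]
  simp only [add_zero]
  gcongr

lemma edges_ennreal (f : ℤ × ℤ → ℝ) :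
    (∑' v : ℤ × ℤ, ENNReal.ofReal ((f (v.1 + 1, v.2) - f v) ^ 2) + 
      ∑' v : ℤ × ℤ, ENNReal.ofReal ((f (v.1, v.2 + 1) - f v) ^ 2)) ≤
    ∑' p : (ℤ × ℤ) × (ℤ × ℤ), ENNReal.ofReal ((if |p.1.1 - p.2.1| + |p.1.2 - p.2.2| = 1 then f p.1 - f p.2 else 0) ^ 2) := by
  let j : (ℤ × ℤ) ⊕ (ℤ × ℤ) → (ℤ × ℤ) × (ℤ × ℤ) := 
    Sum.elim (fun v => ((v.1 + 1, v.2), v)) (fun v => ((v.1, v.2 + 1), v))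
  have hj : Function.Injective j := by
    rintro (⟨a, b⟩ | ⟨a, b⟩) (⟨c, d⟩ | ⟨c, d⟩) h
    · simp [j] at h; simp [h]
    · simp [j] at h; omega
    · simp [j] at h; omega
    · simp [j] at h; simp [h]
  refine le_trans (le_of_eq ?_) (ENNReal.tsum_comp_le_tsum_of_injective hj _)
  rw [Summable.tsum_sum ENNReal.summable ENNReal.summable]
  simp [j]

lemma trace_real (f : ℤ × ℤ → ℝ)
    (hs : Summable fun p : (ℤ × ℤ) × (ℤ × ℤ) =>
      (if |p.1.1 - p.2.1| + |p.1.2 - p.2.2| = 1 then f p.1 - f p.2 else 0) ^ 2) :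
    (Summable fun p : ℤ × ℤ => ((f (p.1, 0) - f (p.2, 0)) / |((p.1 - p.2 : ℤ) : ℝ)|) ^ 2) ∧
    ∑' p : ℤ × ℤ, ((f (p.1, 0) - f (p.2, 0)) / |((p.1 - p.2 : ℤ) : ℝ)|) ^ 2 ≤
     48 * ∑' p : (ℤ × ℤ) × (ℤ × ℤ),
      (if |p.1.1 - p.2.1| + |p.1.2 - p.2.2| = 1 then f p.1 - f p.2 else 0) ^ 2 := by
  have h := (trace_ennreal f).trans (mul_le_mul_right (edges_ennreal f) 48)
  rw [← ENNReal.ofReal_tsum_of_nonneg (fun p => sq_nonneg _) hs] at h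
  have h48 : (48 : ENNReal) = ENNReal.ofReal 48 := by norm_num
  rw [h48, ← ENNReal.ofReal_mul (by norm_num)] at h
  have hsum : Summable fun p : ℤ × ℤ => ((f (p.1, 0) - f (p.2, 0)) / |((p.1 - p.2 : ℤ) : ℝ)|) ^ 2 := by
    have h3 := ENNReal.summable_toReal (ne_top_of_le_ne_top ENNReal.ofReal_ne_top h)
    refine h3.congr fun p => ?_
    rw [ENNReal.toReal_ofReal (sq_nonneg _)]
  refine ⟨hsum, ?_⟩
  rw [← ENNReal.ofReal_tsum_of_nonneg (fun p => sq_nonneg _) hsum] at h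
  refine (ENNReal.ofReal_le_ofReal_iff ?_).1 h
  have : 0 ≤ ∑' p : (ℤ × ℤ) × (ℤ × ℤ),
      (if |p.1.1 - p.2.1| + |p.1.2 - p.2.2| = 1 then f p.1 - f p.2 else 0) ^ 2 := tsum_nonneg fun p => sq_nonneg _
  positivity

lemma chain_point (N : ℕ) (g : ℤ → ℝ) (hg : g (N+1) = 0)
    (hs : Summable fun p : ℤ × ℤ => ((g p.1 - g p.2) / |((p.1 - p.2 : ℤ) : ℝ)|) ^ 2) (k : ℤ) (hk : |k| ≤ N) :
    g k ^ 2 ≤ (2 * (N:ℝ) + 1) ^ 2 * ∑' p : ℤ × ℤ, ((g p.1 - g p.2) / |((p.1 - p.2 : ℤ) : ℝ)|) ^ 2 := by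
  have h := hs.le_tsum (k, (N:ℤ)+1) (fun p _ => sq_nonneg _)
  simp only [hg, sub_zero, div_pow, sq_abs] at h ⊢
  refine le_trans ?_ (mul_le_mul_of_nonneg_left h (by positivity))
  have h1 := abs_le.1 hk
  have a1 : (-(N:ℝ)) ≤ k := by exact_mod_cast h1.1
  have a2 : (k:ℝ) ≤ N := by exact_mod_cast h1.2
  push_cast
  have hpos : 0 < ((k:ℝ) - (N + 1)) ^ 2 := by
    have hne : (k:ℝ) - (N + 1) < 0 := by linarith
    nlinarith
  rw [← mul_div_assoc, le_div_iff₀ hpos]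
  rw [mul_comm]
  apply mul_le_mul_of_nonneg_right _ (sq_nonneg _)
  nlinarith

lemma point2D (N : ℕ) (f : ℤ × ℤ → ℝ) 
    (hs : Summable fun p : (ℤ × ℤ) × (ℤ × ℤ) =>
      (if |p.1.1 - p.2.1| + |p.1.2 - p.2.2| = 1 then f p.1 - f p.2 else 0) ^ 2)
    (hf : ∀ j, f (N + 1, j) = 0) (v : ℤ × ℤ) (hv : |v.1| ≤ N) :
    f v ^ 2 ≤ (2 * (N:ℝ) + 1) ^ 2 * (48 * ∑' p : (ℤ × ℤ) × (ℤ × ℤ),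
      (if |p.1.1 - p.2.1| + |p.1.2 - p.2.2| = 1 then f p.1 - f p.2 else 0) ^ 2) := by
  obtain ⟨k, j⟩ := v
  let e : (ℤ × ℤ) × (ℤ × ℤ) ≃ (ℤ × ℤ) × (ℤ × ℤ) := 
    Equiv.prodCongr (Equiv.prodCongr (Equiv.refl ℤ) (Equiv.addRight j)) (Equiv.prodCongr (Equiv.refl ℤ) (Equiv.addRight j))
  have hs' := e.summable_iff.2 hs
  have he := e.tsum_eq (fun p : (ℤ × ℤ) × (ℤ × ℤ) =>
      (if |p.1.1 - p.2.1| + |p.1.2 - p.2.2| = 1 then f p.1 - f p.2 else 0) ^ 2)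
  have hfun : ∀ p, (fun p : (ℤ × ℤ) × (ℤ × ℤ) =>
      (if |p.1.1 - p.2.1| + |p.1.2 - p.2.2| = 1 then f p.1 - f p.2 else 0) ^ 2) (e p) = 
      (if |p.1.1 - p.2.1| + |p.1.2 - p.2.2| = 1 then (fun v : ℤ × ℤ => f (v.1, v.2 + j)) p.1 - (fun v : ℤ × ℤ => f (v.1, v.2 + j)) p.2 else 0) ^ 2 := by
    intro p
    simp [e, Prod.map]
  rw [← he, tsum_congr hfun]
  have ht := trace_real (fun v : ℤ × ℤ => f (v.1, v.2 + j)) (hs'.congr fun p => hfun p)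
  have hc := chain_point N (fun i => f (i, 0 + j)) (hf _) ht.1 k hv
  simp only [zero_add] at hc ht
  refine hc.trans (mul_le_mul_of_nonneg_left ht.2 (by positivity))

/-- line sites -/
abbrev Lin (N : ℕ) : Type := {k : ℤ // |k| ≤ (N : ℤ)}
/-- off-line sites -/
abbrev Off (N : ℕ) : Type := {v : ℤ × ℤ // v ∈ rect N ∧ v.2 ≠ 0}

noncomputable instance (N : ℕ) : Fintype (Lin N) := by
  have : Set.Finite {k : ℤ | |k| ≤ (N : ℤ)} := by
    refine (Set.finite_Icc (-(N:ℤ)) N).subset fun k hk => ?_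
    exact abs_le.1 hk
  exact this.fintype

lemma rect_finite (N : ℕ) : (rect N).Finite := by
  refine ((Set.finite_Icc (-(N:ℤ)) N).prod (Set.finite_Icc (-(2 * N:ℤ)) (2 * N))).subset fun v hv => ?_
  exact ⟨abs_le.1 hv.1, abs_le.1 hv.2⟩

noncomputable instance (N : ℕ) : Fintype (Off N) := by
  have : Set.Finite {v : ℤ × ℤ | v ∈ rect N ∧ v.2 ≠ 0} := 
    (rect_finite N).subset fun v hv => hv.1
  exact this.fintype

open Classical in
noncomputable def ext1 {R : Type*} [Zero R] {N : ℕ} (g : Lin N → R) (k : ℤ) : R :=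
  if h : |k| ≤ (N : ℤ) then g ⟨k, h⟩ else 0

open Classical in
noncomputable def ext2 {R : Type*} [Zero R] {N : ℕ} (g : Lin N ⊕ Off N → R) (v : ℤ × ℤ) : R :=
  if h : |v.1| ≤ (N : ℤ) ∧ v.2 = 0 then g (Sum.inl ⟨v.1, h.1⟩) else
    if h : v ∈ rect N ∧ v.2 ≠ 0 then g (Sum.inr ⟨v, h⟩) else 0

lemma ext2_line {R : Type*} [Zero R] {N : ℕ} (g : Lin N ⊕ Off N → R) (k : ℤ) :
    ext2 g (k, 0) = ext1 (fun i => g (Sum.inl i)) k := by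
  simp [ext2, ext1]

lemma ext2_out {R : Type*} [Zero R] {N : ℕ} (g : Lin N ⊕ Off N → R) (v : ℤ × ℤ) (hv : v ∉ rect N) :
    ext2 g v = 0 := by
  rw [ext2, dif_neg, dif_neg]
  · exact fun h => hv h.1
  · intro h
    apply hv
    refine ⟨h.1, ?_⟩
    rw [h.2]; simp

lemma ext2_inl {R : Type*} [Zero R] {N : ℕ} (g : Lin N ⊕ Off N → R) (k : Lin N) :
    ext2 g (k.1, 0) = g (Sum.inl k) := by
  rw [ext2, dif_pos ⟨k.2, rfl⟩]

lemma ext2_inr {R : Type*} [Zero R] {N : ℕ} (g : Lin N ⊕ Off N → R) (v : Off N) :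
    ext2 g v.1 = g (Sum.inr v) := by
  rw [ext2, dif_neg (fun h => v.2.2 h.2), dif_pos v.2]

lemma ext1_in {R : Type*} [Zero R] {N : ℕ} (g : Lin N → R) (k : Lin N) :
    ext1 g k.1 = g k := by
  rw [ext1, dif_pos k.2]

lemma ext1_add {N : ℕ} (g h : Lin N → ℝ) (k : ℤ) : ext1 (g + h) k = ext1 g k + ext1 h k := by
  unfold ext1; split_ifs <;> simp

lemma ext1_smul {N : ℕ} (c : ℝ) (h : Lin N → ℝ) (k : ℤ) : ext1 (c • h) k = c * ext1 h k := by
  unfold ext1; split_ifs <;> simp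

lemma ext2_add {N : ℕ} (g h : Lin N ⊕ Off N → ℝ) (k : ℤ × ℤ) : ext2 (g + h) k = ext2 g k + ext2 h k := by
  unfold ext2; split_ifs <;> simp

lemma ext2_smul {N : ℕ} (c : ℝ) (h : Lin N ⊕ Off N → ℝ) (k : ℤ × ℤ) : ext2 (c • h) k = c * ext2 h k := by
  unfold ext2; split_ifs <;> simp

lemma ext1_cast {N : ℕ} (g : Lin N → ℤ) (k : ℤ) : ext1 (icast g) k = ((ext1 g k : ℤ) : ℝ) := by
  unfold ext1; split_ifs <;> simp [icast]

lemma ext2_cast {N : ℕ} (g : Lin N ⊕ Off N → ℤ) (k : ℤ × ℤ) : ext2 (icast g) k = ((ext2 g k : ℤ) : ℝ) := by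
  unfold ext2; split_ifs <;> simp [icast]

lemma summable_2D {N : ℕ} (f : Lin N ⊕ Off N → ℝ) :
    Summable fun p : (ℤ × ℤ) × (ℤ × ℤ) =>
      (if |p.1.1 - p.2.1| + |p.1.2 - p.2.2| = 1 then ext2 f p.1 - ext2 f p.2 else 0) ^ 2 := by
  apply summable_of_finite_support
  let S : Set (ℤ × ℤ) := Set.Icc (-(N:ℤ) - 1) (N + 1) ×ˢ Set.Icc (-(2 * N:ℤ) - 1) (2 * N + 1)
  have hS : S.Finite := (Set.finite_Icc _ _).prod (Set.finite_Icc _ _)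
  refine (hS.prod hS).subset fun p hp => ?_
  simp only [Function.mem_support] at hp
  by_cases hadj : |p.1.1 - p.2.1| + |p.1.2 - p.2.2| = 1
  · rw [if_pos hadj] at hp
    have hor : p.1 ∈ rect N ∨ p.2 ∈ rect N := by
      by_contra hcon
      rw [not_or] at hcon
      apply hp
      rw [ext2_out f _ hcon.1, ext2_out f _ hcon.2]; simp
    simp only [S, Set.mem_prod, Set.mem_Icc]
    simp only [rect, Set.mem_setOf_eq] at hor
    have b1 : |p.1.1 - p.2.1| ≤ 1 := by linarith [abs_nonneg (p.1.2 - p.2.2)]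
    have b2 : |p.1.2 - p.2.2| ≤ 1 := by linarith [abs_nonneg (p.1.1 - p.2.1)]
    rw [abs_le] at b1 b2
    simp only [abs_le] at hor
    rcases hor with h | h <;> refine ⟨⟨⟨?_, ?_⟩, ⟨?_, ?_⟩⟩, ⟨⟨?_, ?_⟩, ⟨?_, ?_⟩⟩⟩ <;> omega
  · rw [if_neg hadj] at hp
    simp at hp

noncomputable def chainEquiv (N : ℕ) : (Lin N → ℤ) ≃ ChainConfig N where
  toFun g := ⟨ext1 g, fun k hk => by rw [ext1, dif_neg (not_le.2 hk)]⟩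
  invFun φ := fun k => φ.val k.1
  left_inv g := by funext k; exact ext1_in g k
  right_inv φ := by
    apply Subtype.ext
    funext k
    simp only [ext1]
    split_ifs with h
    · rfl
    · exact (φ.2 k (not_le.1 h)).symm

noncomputable def configEquiv (N : ℕ) : (Lin N ⊕ Off N → ℤ) ≃ Config2D N where
  toFun g := ⟨ext2 g, fun v hv => ext2_out g v hv⟩
  invFun φ := Sum.elim (fun k => φ.val (k.1, 0)) (fun v => φ.val v.1)
  left_inv g := by 
    funext s
    rcases s with k | v
    · exact ext2_inl g k
    · exact ext2_inr g v
  right_inv φ := by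
    apply Subtype.ext
    funext v
    obtain ⟨a, b⟩ := v
    simp only [ext2]
    split_ifs with h h'
    · simp [h.2]
    · rfl
    · refine (φ.2 _ fun hv => ?_).symm
      by_cases hb : b = 0
      · exact h ⟨hv.1, hb⟩
      · exact h' ⟨hv, hb⟩

lemma exists_q2 (N : ℕ) : ∃ q : QuadraticForm ℝ (Lin N ⊕ Off N → ℝ), ∀ f, q f = 
    ∑' p : (ℤ × ℤ) × (ℤ × ℤ),
      (if |p.1.1 - p.2.1| + |p.1.2 - p.2.2| = 1 then ext2 f p.1 - ext2 f p.2 else 0) ^ 2 := by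
  let l : (ℤ × ℤ) × (ℤ × ℤ) → (Lin N ⊕ Off N → ℝ) →ₗ[ℝ] ℝ := fun p => 
    { toFun := fun f => if |p.1.1 - p.2.1| + |p.1.2 - p.2.2| = 1 then ext2 f p.1 - ext2 f p.2 else 0
      map_add' := fun f g => by
        simp only [ext2_add]; split_ifs <;> ring
      map_smul' := fun c f => by
        simp only [ext2_smul, RingHom.id_apply, smul_eq_mul]; split_ifs <;> ring }
  exact exists_form l (fun f => summable_2D f)

lemma summable_chain {N : ℕ} (g : Lin N → ℝ) :
    Summable fun p : ℤ × ℤ => ((ext1 g p.1 - ext1 g p.2) / |((p.1 - p.2 : ℤ) : ℝ)|) ^ 2 := by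
  have := (trace_real _ (summable_2D (Sum.elim g (0 : Off N → ℝ)))).1
  simpa only [ext2_line, Sum.elim_inl] using this

lemma exists_qc (N : ℕ) : ∃ q : QuadraticForm ℝ (Lin N → ℝ), ∀ g, q g = 
    ∑' p : ℤ × ℤ, ((ext1 g p.1 - ext1 g p.2) / |((p.1 - p.2 : ℤ) : ℝ)|) ^ 2 := by
  let l : ℤ × ℤ → (Lin N → ℝ) →ₗ[ℝ] ℝ := fun p => 
    { toFun := fun f => (ext1 f p.1 - ext1 f p.2) / |((p.1 - p.2 : ℤ) : ℝ)|
      map_add' := fun f g => by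
        simp only [ext1_add]; ring
      map_smul' := fun c f => by
        simp only [ext1_smul, RingHom.id_apply, smul_eq_mul]; ring }
  exact exists_form l (fun f => summable_chain f)

lemma qc_coercive (N : ℕ) (q : QuadraticForm ℝ (Lin N → ℝ)) (hq : ∀ g, q g = 
    ∑' p : ℤ × ℤ, ((ext1 g p.1 - ext1 g p.2) / |((p.1 - p.2 : ℤ) : ℝ)|) ^ 2) :
    ∃ ε : ℝ, 0 < ε ∧ ∀ g, ε * ∑ i, g i ^ 2 ≤ q g := by
  set K : ℝ := ((Fintype.card (Lin N) : ℝ) + 1) * (2 * (N:ℝ) + 1) ^ 2 with hK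
  have hKp : 0 < K := by positivity
  refine ⟨K⁻¹, by positivity, fun g => ?_⟩
  rw [inv_mul_le_iff₀ hKp]
  have hq0 : 0 ≤ q g := by rw [hq]; exact tsum_nonneg fun p => sq_nonneg _
  have h1 : ∀ i ∈ Finset.univ, g i ^ 2 ≤ (2 * (N:ℝ) + 1) ^ 2 * q g := by
    intro i _
    have := chain_point N (ext1 g) (by rw [ext1, dif_neg]; rw [abs_of_nonneg (by positivity)]; omega) (summable_chain g) i.1 i.2
    rwa [ext1_in, ← hq] at this
  have h2 := Finset.sum_le_card_nsmul _ _ _ h1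
  rw [nsmul_eq_mul, Finset.card_univ] at h2
  refine h2.trans ?_
  rw [hK]
  have : 0 ≤ (2 * (N:ℝ) + 1) ^ 2 * q g := by positivity
  nlinarith

lemma q2_coercive (N : ℕ) (q : QuadraticForm ℝ (Lin N ⊕ Off N → ℝ)) (hq : ∀ f, q f = 
    ∑' p : (ℤ × ℤ) × (ℤ × ℤ),
      (if |p.1.1 - p.2.1| + |p.1.2 - p.2.2| = 1 then ext2 f p.1 - ext2 f p.2 else 0) ^ 2) :
    ∃ ε : ℝ, 0 < ε ∧ ∀ g, ε * ∑ i, g i ^ 2 ≤ q g := by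
  set K : ℝ := ((Fintype.card (Lin N ⊕ Off N) : ℝ) + 1) * ((2 * (N:ℝ) + 1) ^ 2 * 48) with hK
  have hKp : 0 < K := by positivity
  refine ⟨K⁻¹, by positivity, fun g => ?_⟩
  rw [inv_mul_le_iff₀ hKp]
  have hq0 : 0 ≤ q g := by rw [hq]; exact tsum_nonneg fun p => sq_nonneg _
  have hb : ∀ j : ℤ, ext2 g ((N:ℤ) + 1, j) = 0 := by
    intro j
    apply ext2_out
    intro h
    have := h.1
    simp only at this
    rw [abs_of_nonneg (by positivity)] at this
    omega
  have h1 : ∀ i ∈ Finset.univ, g i ^ 2 ≤ (2 * (N:ℝ) + 1) ^ 2 * (48 * q g) := by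
    intro i _
    rcases i with k | v
    · have := point2D N (ext2 g) (summable_2D g) hb (k.1, 0) k.2
      rwa [ext2_inl, ← hq] at this
    · have := point2D N (ext2 g) (summable_2D g) hb v.1 v.2.1.1
      rwa [ext2_inr, ← hq] at this
  have h2 := Finset.sum_le_card_nsmul _ _ _ h1
  rw [nsmul_eq_mul, Finset.card_univ] at h2
  refine h2.trans ?_
  rw [hK]
  have : 0 ≤ (2 * (N:ℝ) + 1) ^ 2 * (48 * q g) := by positivity
  nlinarith

lemma tsum_split {α β : Type*} (F : (α → ℤ) → ℝ) (G : (β → ℤ) → ℝ) (hF : Summable F) (hG : Summable G)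
    (hF0 : ∀ x, 0 ≤ F x) (hG0 : ∀ x, 0 ≤ G x) :
    ∑' x : α ⊕ β → ℤ, F (fun i => x (Sum.inl i)) * G (fun i => x (Sum.inr i)) = (∑' x, F x) * ∑' y, G y := by
  rw [hF.tsum_mul_tsum hG (hF.mul_of_nonneg hG hF0 hG0), ← (Equiv.sumArrowEquivProdArrow α β ℤ).tsum_eq]
  rfl

/-- origin -/
def orig (N : ℕ) : Lin N := ⟨0, by simp⟩

lemma core_ineq (N : ℕ) (β : ℝ) (hβ : 0 < β) (qc : QuadraticForm ℝ (Lin N → ℝ)) (hqc : ∀ g, qc g = 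
    ∑' p : ℤ × ℤ, ((ext1 g p.1 - ext1 g p.2) / |((p.1 - p.2 : ℤ) : ℝ)|) ^ 2)
    (q2 : QuadraticForm ℝ (Lin N ⊕ Off N → ℝ)) (hq2 : ∀ f, q2 f = 
    ∑' p : (ℤ × ℤ) × (ℤ × ℤ),
      (if |p.1.1 - p.2.1| + |p.1.2 - p.2.2| = 1 then ext2 f p.1 - ext2 f p.2 else 0) ^ 2) :
    (∑' x : Lin N ⊕ Off N → ℤ, (x (Sum.inl (orig N)) : ℝ)^2 * Real.exp (-(96 * β * q2 (icast x)))) / 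
      (∑' x : Lin N ⊕ Off N → ℤ, Real.exp (-(96 * β * q2 (icast x)))) ≤
    (∑' x : Lin N → ℤ, (x (orig N) : ℝ)^2 * Real.exp (-(β * qc (icast x)))) / 
      (∑' x : Lin N → ℤ, Real.exp (-(β * qc (icast x)))) := by
  obtain ⟨ε₁, hε₁, hc1⟩ := qc_coercive N qc hqc
  obtain ⟨ε₂, hε₂, hc2⟩ := q2_coercive N q2 hq2
  obtain ⟨qr, hqr⟩ := exists_form (V := Lin N ⊕ Off N → ℝ) (P := Off N) (fun v => LinearMap.proj (Sum.inr v)) 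
    (fun f => Summable.of_finite)
  simp only [tsum_fintype, LinearMap.proj_apply] at hqr
  let π : (Lin N ⊕ Off N → ℝ) →ₗ[ℝ] (Lin N → ℝ) := LinearMap.funLeft ℝ ℝ Sum.inl
  have hπ : ∀ f, π f = fun i => f (Sum.inl i) := fun f => rfl
  set ε := 48 * β * ε₂ with hε
  have hεp : 0 < ε := by positivity
  have key := mono_form (β • qc.comp π + ε • qr) ((96 * β) • q2) (min (β * ε₁) ε) (by positivity) ?_ ?_ (Sum.inl (orig N))
  · simp only [QuadraticMap.smul_apply, QuadraticMap.add_apply, QuadraticMap.comp_apply, smul_eq_mul, hqr, hπ] at key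
    refine key.trans (le_of_eq ?_)
    set F : (Lin N → ℤ) → ℝ := fun x => Real.exp (-(β * qc (icast x))) with hF
    set F2 : (Lin N → ℤ) → ℝ := fun x => (x (orig N) : ℝ)^2 * Real.exp (-(β * qc (icast x))) with hF2
    set G : (Off N → ℤ) → ℝ := fun x => Real.exp (-(ε * ∑ i, (x i : ℝ)^2)) with hG
    have hco : ∀ f, (β * ε₁) * ∑ i, f i ^ 2 ≤ β * qc f := fun f => by
      rw [mul_assoc]; exact mul_le_mul_of_nonneg_left (hc1 f) hβ.le
    have sF : Summable F := summable_form (fun f => β * qc f) (β * ε₁) (by positivity) hco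
    have sF2 : Summable F2 := summable_form2 (fun f => β * qc f) (β * ε₁) (by positivity) hco (orig N)
    have sG : Summable G := summable_gauss ε hεp
    have e1 := tsum_split F G sF sG (fun x => by positivity) (fun x => by positivity)
    have e2 := tsum_split F2 G sF2 sG (fun x => by positivity) (fun x => by positivity)
    have hz : ∀ x : Lin N ⊕ Off N → ℤ, Real.exp (-(β * qc (fun i => icast x (Sum.inl i)) + ε * ∑ v, icast x (Sum.inr v) ^ 2))
        = F (fun i => x (Sum.inl i)) * G (fun i => x (Sum.inr i)) := by
      intro x
      simp only [hF, hG]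
      rw [← Real.exp_add, neg_add]
      rfl
    have hn : ∀ x : Lin N ⊕ Off N → ℤ, (x (Sum.inl (orig N)) : ℝ)^2 * Real.exp (-(β * qc (fun i => icast x (Sum.inl i)) + ε * ∑ v, icast x (Sum.inr v) ^ 2))
        = F2 (fun i => x (Sum.inl i)) * G (fun i => x (Sum.inr i)) := by
      intro x
      rw [hz]
      simp only [hF, hF2]
      ring
    rw [tsum_congr hz, tsum_congr hn, e1, e2]
    have hGp : 0 < ∑' y, G y := sG.tsum_pos (fun x => by positivity) 0 (by positivity)
    exact mul_div_mul_right _ _ hGp.ne'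
  · intro f
    simp only [QuadraticMap.smul_apply, QuadraticMap.add_apply, QuadraticMap.comp_apply, smul_eq_mul, hqr, hπ]
    rw [Fintype.sum_sum_type, mul_add]
    have h1 := hc1 (fun i => f (Sum.inl i))
    have p1 : 0 ≤ ∑ i, f (Sum.inl i) ^ 2 := Finset.sum_nonneg fun i _ => sq_nonneg _
    have p2 : 0 ≤ ∑ i, f (Sum.inr i) ^ 2 := Finset.sum_nonneg fun i _ => sq_nonneg _
    have m1 := mul_le_mul_of_nonneg_right (min_le_left (β * ε₁) ε) p1
    have m2 := mul_le_mul_of_nonneg_right (min_le_right (β * ε₁) ε) p2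
    have := mul_le_mul_of_nonneg_left h1 hβ.le
    linarith
  · intro f
    simp only [QuadraticMap.smul_apply, QuadraticMap.add_apply, QuadraticMap.comp_apply, smul_eq_mul, hqr, hπ]
    have ht := (trace_real (ext2 f) (summable_2D f)).2
    simp only [ext2_line] at ht
    rw [← hq2, ← hqc] at ht
    have h2 := hc2 f
    rw [Fintype.sum_sum_type] at h2
    have p1 : 0 ≤ ∑ i, f (Sum.inl i) ^ 2 := Finset.sum_nonneg fun i _ => sq_nonneg _
    have h3 : ε₂ * ∑ i, f (Sum.inr i) ^ 2 ≤ q2 f := by nlinarith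
    rw [hε]
    nlinarith

theorem twoD_gff_dominated_by_gaussian_chain :
    ∃ C₀ : ℝ, 1 < C₀ ∧
      ∀ β : ℝ, 0 < β → ∀ N : ℕ, 1 ≤ N →
        var2D N (C₀ * β) ≤ chainVar N β 2 2 := by
  refine ⟨192, by norm_num, fun β hβ N _ => ?_⟩
  obtain ⟨qc, hqc⟩ := exists_qc N
  obtain ⟨q2, hq2⟩ := exists_q2 N
  have core := core_ineq N β hβ qc hqc q2 hq2
  have w2 : ∀ x, weight2D (192 * β) (configEquiv N x).val = Real.exp (-(96 * β * q2 (icast x))) := by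
    intro x
    rw [weight2D, energy2D, hq2]
    congr 2
    have : ∀ p : (ℤ × ℤ) × (ℤ × ℤ), (if |p.1.1 - p.2.1| + |p.1.2 - p.2.2| = 1 then 
        ((((configEquiv N x).val p.1 - (configEquiv N x).val p.2 : ℤ) : ℝ)) ^ 2 else 0) = 
        (if |p.1.1 - p.2.1| + |p.1.2 - p.2.2| = 1 then ext2 (icast x) p.1 - ext2 (icast x) p.2 else 0) ^ 2 := by
      intro p
      rw [ext2_cast, ext2_cast]
      split_ifs
      · push_cast; rfl
      · simp
    rw [tsum_congr this]
    ring
  have wc : ∀ x, chainWeight β 2 2 (chainEquiv N x).val = Real.exp (-(β * qc (icast x))) := by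
    intro x
    rw [chainWeight, chainEnergy, hqc]
    congr 3
    refine tsum_congr fun p => ?_
    rw [ext1_cast, ext1_cast]
    split_ifs with h
    · simp [h]
    · rw [Real.rpow_two, Real.rpow_two, div_pow, sq_abs]
      push_cast; rfl
  have hmean : chainMean N β 2 2 = 0 := by
    rw [chainMean, ← (chainEquiv N).tsum_eq]
    have h1 : ∀ x : Lin N → ℤ, (((chainEquiv N x).val 0 : ℤ) : ℝ) * chainWeight β 2 2 (chainEquiv N x).val = 
        (x (orig N) : ℝ) * Real.exp (-(β * qc (icast x))) := by
      intro x
      rw [wc]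
      have : (chainEquiv N x).val 0 = x (orig N) := ext1_in x (orig N)
      rw [this]
    rw [tsum_congr h1]
    have h2 := (Equiv.neg (Lin N → ℤ)).tsum_eq (fun x => (x (orig N) : ℝ) * Real.exp (-(β * qc (icast x))))
    have h3 : ∀ x : Lin N → ℤ, (fun x : Lin N → ℤ => (x (orig N) : ℝ) * Real.exp (-(β * qc (icast x)))) (Equiv.neg (Lin N → ℤ) x) = 
        -((x (orig N) : ℝ) * Real.exp (-(β * qc (icast x)))) := by
      intro x
      have : icast (-x) = - icast x := by funext i; simp [icast]
      simp [this]
    rw [tsum_congr h3, tsum_neg] at h2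
    have h4 : ∑' x : Lin N → ℤ, (x (orig N) : ℝ) * Real.exp (-(β * qc (icast x))) = 0 := by linarith
    rw [h4, zero_div]
  have hv2 : var2D N (192 * β) ≤ (∑' x : Lin N ⊕ Off N → ℤ, (x (Sum.inl (orig N)) : ℝ)^2 * Real.exp (-(96 * β * q2 (icast x)))) / 
      (∑' x : Lin N ⊕ Off N → ℤ, Real.exp (-(96 * β * q2 (icast x)))) := by
    have h0 : ∀ x, (((configEquiv N x).val (0, 0) : ℤ) : ℝ) ^ 2 * weight2D (192 * β) (configEquiv N x).val = 
        (x (Sum.inl (orig N)) : ℝ)^2 * Real.exp (-(96 * β * q2 (icast x))) := by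
      intro x
      rw [w2]
      have : (configEquiv N x).val (0, 0) = x (Sum.inl (orig N)) := ext2_inl x (orig N)
      rw [this]
    rw [var2D, Z2D, ← tsum_congr h0, ← tsum_congr w2, (configEquiv N).tsum_eq (fun φ : Config2D N => weight2D (192 * β) φ.val), 
      (configEquiv N).tsum_eq (fun φ : Config2D N => ((φ.val (0, 0) : ℤ) : ℝ) ^ 2 * weight2D (192 * β) φ.val)]
    linarith [sq_nonneg (mean2D N (192 * β))]
  have hvc : chainVar N β 2 2 = (∑' x : Lin N → ℤ, (x (orig N) : ℝ)^2 * Real.exp (-(β * qc (icast x)))) / 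
      (∑' x : Lin N → ℤ, Real.exp (-(β * qc (icast x)))) := by
    have h0 : ∀ x, (((chainEquiv N x).val 0 : ℤ) : ℝ) ^ 2 * chainWeight β 2 2 (chainEquiv N x).val = 
        (x (orig N) : ℝ)^2 * Real.exp (-(β * qc (icast x))) := by
      intro x
      rw [wc]
      have : (chainEquiv N x).val 0 = x (orig N) := ext1_in x (orig N)
      rw [this]
    rw [chainVar, chainZ, hmean, ← tsum_congr h0, ← tsum_congr wc, (chainEquiv N).tsum_eq (fun φ : ChainConfig N => chainWeight β 2 2 φ.val), 
      (chainEquiv N).tsum_eq (fun φ : ChainConfig N => ((φ.val 0 : ℤ) : ℝ) ^ 2 * chainWeight β 2 2 φ.val)]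
    ring
  rw [hvc]
  exact hv2.trans core
end
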